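/- Let a = b be positive real numbers and c > 2a a real number. Then the holomorphic automorphism F = φ₃ ∘ φ₂⁻¹ ∘ φ₁⁻¹ ∘ φ₂ ∘ φ₁ of ℂ³ is tangent to the identity at the origin and its basin of attraction Ω = {p ∈ ℂ³ \ {0} : F^n(p) → 0} is biholomorphic to ℂ* × ℂ². -/

import Mathlib

/-!
Write `v = 2a·zt`, `ω = 2a·w` and `γ = c/(2a) > 1`. Because `a = b`, the map `F` multiplies `z` and
`t` by the same factor `exp(-v·E/2)`, `E = exp(ω - v)`, and `p ↦ (v, ω)` (`Pr`) semiconjugates `F`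
to the planar automorphism `Gm γ`. The ratio `z/t` is invariant (`Fmap_ratio`) and `F` fixes every
point with `zt = 0` (`Fmap_fixed`); hence `Ω` is exactly the preimage of the planar basin
`{v ≠ 0, Gⁿ(v, ω) → 0}` (`mem_basinF_iff`). If `Φ` identifies the planar basin with `ℂ²`
(`planar_biholo`), then `(z, t, w) ↦ (z, Φ(v, ω))` identifies `Ω` with `ℂ* × ℂ²` (`basin_biholo`):
given `z ≠ 0`, the pair `(v, ω)` determines `t` and `w`.

The planar basin is handled with Fatou coordinates. With `x = 1/v` the first component becomes
`x ↦ x + 1 - 1/(2x) + …`, so that `X = x + ½ log x` satisfies `X ↦ X + 1 + O(|x|^{-(1+η)})`.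
In the second variable `ω ↦ (1 - γv + …)ω + …`. An entire function `h` is chosen so that the curve
`ω = v² h(v)` is invariant up to order `⌈γ⌉ + 1` (`exists_defect`); if `γ` is an integer, one
resonant term is left over, and it is absorbed by a logarithm. Then
`Y = x^γ (ω - v² h(v)) - κ log x` satisfies `Y ↦ Y + O(|x|^{-(1+η)})(1 + |Y|)`
(`exists_normal_form`, `step_Y`), and `TailHyp` records that `G` is a summable perturbation of
`(X, Y) ↦ (X + 1, Y)` on each domain `{Re x > R, |Y| < M}` with `R` large (`tailHyp`).
Consequently `(Xₙ - n, Yₙ)` converges there, its limit is a small perturbation of `(X, Y)`, hence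
injective with holomorphic inverse, and its image meets every forward orbit of
`(X, Y) ↦ (X + 1, Y)` with `|Y| < M - 1` (`fatou_biholo`). The hypothesis `γ > 1` forces `x·ω` to
stay bounded along any orbit in the basin, whence `Y` stays bounded and the orbit enters one of
these domains (`enter`). Pulling back by the automorphism `G` extends the limit map to a
biholomorphism from the whole planar basin onto `ℂ²`.
-/

open Filter Set

/-- The shear `φ₁(z,t,w) = (z, t, w − zt)`. -/
noncomputable def φ₁ (p : ℂ × ℂ × ℂ) : ℂ × ℂ × ℂ :=
  (p.1, p.2.1, p.2.2 - p.1 * p.2.1)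

/-- The inverse shear `φ₁⁻¹(z,t,w) = (z, t, w + zt)`. -/
noncomputable def φ₁inv (p : ℂ × ℂ × ℂ) : ℂ × ℂ × ℂ :=
  (p.1, p.2.1, p.2.2 + p.1 * p.2.1)

/-- The overshear `φ₂(z,t,w) = (z·e^{aw}, t·e^{bw}, w)`. -/
noncomputable def φ₂ (a b : ℂ) (p : ℂ × ℂ × ℂ) : ℂ × ℂ × ℂ :=
  (p.1 * Complex.exp (a * p.2.2), p.2.1 * Complex.exp (b * p.2.2), p.2.2)

/-- The inverse overshear `φ₂⁻¹(z,t,w) = (z·e^{−aw}, t·e^{−bw}, w)`. -/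
noncomputable def φ₂inv (a b : ℂ) (p : ℂ × ℂ × ℂ) : ℂ × ℂ × ℂ :=
  (p.1 * Complex.exp (-(a * p.2.2)), p.2.1 * Complex.exp (-(b * p.2.2)), p.2.2)

/-- The overshear `φ₃(z,t,w) = (z, t, w·e^{−(a+b+c)zt} + (a+b)z²t²)`. -/
noncomputable def φ₃ (a b c : ℂ) (p : ℂ × ℂ × ℂ) : ℂ × ℂ × ℂ :=
  (p.1, p.2.1,
    p.2.2 * Complex.exp (-((a + b + c) * p.1 * p.2.1)) + (a + b) * p.1 ^ 2 * p.2.1 ^ 2)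

/-- The automorphism `F = φ₃ ∘ φ₂⁻¹ ∘ φ₁⁻¹ ∘ φ₂ ∘ φ₁` of `ℂ³`. -/
noncomputable def Fmap (a b c : ℂ) : ℂ × ℂ × ℂ → ℂ × ℂ × ℂ :=
  φ₃ a b c ∘ φ₂inv a b ∘ φ₁inv ∘ φ₂ a b ∘ φ₁

/-- The projection `π(z,t,w) = (zt, w)`. -/
def πmap (p : ℂ × ℂ × ℂ) : ℂ × ℂ := (p.1 * p.2.1, p.2.2)

/-- The basin of attraction `Ω = {p ∈ ℂ³ \ {0} : F^[n] p → 0}` of `F`. -/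
noncomputable def basinF (a b c : ℂ) : Set (ℂ × ℂ × ℂ) :=
  {p | p ≠ 0 ∧ Tendsto (fun n => (Fmap a b c)^[n] p) atTop (nhds 0)}

/-- The basin of attraction `Ω̃ = {q ∈ ℂ² \ {0} : G^[n] q → 0}` of a map `G : ℂ² → ℂ²`. -/
noncomputable def basinG (G : ℂ × ℂ → ℂ × ℂ) : Set (ℂ × ℂ) :=
  {q | q ≠ 0 ∧ Tendsto (fun n => G^[n] q) atTop (nhds 0)}

open Topology Asymptotics

/-! ### Limits of summable perturbations of a translation -/

/-- The domain `{Re x > R, |y| < M}` in the `(x, y)`-plane. -/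
def Dom (R M : ℝ) : Set (ℂ × ℂ) := {d | R < d.1.re ∧ ‖d.2‖ < M}

/-- The first Fatou coordinate `x + ½ log x`, with the principal logarithm. -/
noncomputable def Xc (x : ℂ) : ℂ := x + Complex.log x / 2

lemma isOpen_Dom (R M : ℝ) : IsOpen (Dom R M) := by
  apply IsOpen.and
  · exact isOpen_lt continuous_const (Complex.continuous_re.comp continuous_fst)
  · exact isOpen_lt (continuous_norm.comp continuous_snd) continuous_const

lemma convex_Dom (R M : ℝ) : Convex ℝ (Dom R M) := by
  have h1 : Convex ℝ {z : ℂ | R < z.re} := convex_halfSpace_re_gt R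
  have h2 : Convex ℝ (Metric.ball (0 : ℂ) M) := convex_ball 0 M
  have := h1.prod h2
  convert this using 1
  ext d
  simp [Dom]

lemma ball_subset_Dom {R M : ℝ} {d : ℂ × ℂ} (hd : d ∈ Dom (R + 1) (M - 1)) :
    Metric.closedBall d 1 ⊆ Dom R M := by
  intro e he
  rw [mem_closedBall_iff_norm, Prod.norm_def, max_le_iff] at he
  obtain ⟨h1, h2⟩ := he
  obtain ⟨h3, h4⟩ := hd
  constructor
  · have := (Complex.abs_re_le_norm (e - d).1).trans h1
    rw [abs_le] at this
    simp only [Prod.fst_sub, Complex.sub_re] at this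
    linarith [this.1]
  · have := norm_add_le (e.2 - d.2) d.2
    rw [sub_add_cancel] at this
    have h5 : ‖e.2 - d.2‖ ≤ 1 := h2
    linarith

/-- Cauchy estimate for the derivative of a bounded map. -/
lemma norm_fderiv_le_of_bounded {f : ℂ × ℂ → ℂ × ℂ} {c : ℂ × ℂ} {r δ : ℝ} (hr : 0 < r)
    (hd : DifferentiableOn ℂ f (Metric.ball c r)) (hb : ∀ x ∈ Metric.ball c r, ‖f x‖ ≤ δ) :
    ‖fderiv ℂ f c‖ ≤ 2 * δ / r := by
  refine Complex.norm_fderiv_le_div_of_mapsTo_ball hd ?_ hr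
  intro x hx
  rw [mem_closedBall_iff_norm]
  have := norm_sub_le (f x) (f c)
  linarith [hb x hx, hb c (Metric.mem_ball_self hr)]

lemma differentiableOn_tsum_of_bounded {f : ℕ → ℂ × ℂ → ℂ × ℂ} {s : Set (ℂ × ℂ)} (hs : IsOpen s)
    {u : ℕ → ℝ} (hu : Summable u) (hd : ∀ n, DifferentiableOn ℂ (f n) s)
    (hb : ∀ n, ∀ x ∈ s, ‖f n x‖ ≤ u n) :
    DifferentiableOn ℂ (fun x => ∑' n, f n x) s := by
  intro x hx
  obtain ⟨r, hr, hrs⟩ := Metric.isOpen_iff.1 hs x hx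
  have hsub : ∀ y ∈ Metric.ball x (r / 2), Metric.ball y (r / 2) ⊆ s := by
    intro y hy z hz
    apply hrs
    rw [Metric.mem_ball] at *
    linarith [dist_triangle z y x]
  have hx0 : x ∈ Metric.ball x (r / 2) := Metric.mem_ball_self (by positivity)
  have key := hasFDerivAt_tsum_of_isPreconnected (𝕜 := ℂ) (f := f)
    (f' := fun n y => fderiv ℂ (f n) y) (u := fun n => 2 * u n / (r / 2)) (x₀ := x) (x := x)
    (s := Metric.ball x (r / 2))
    ((hu.mul_left 2).div_const _) Metric.isOpen_ball
    (convex_ball x (r / 2)).isPreconnected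
    (fun n y hy => ((hd n).differentiableAt
      (hs.mem_nhds (hsub y hy (Metric.mem_ball_self (by positivity))))).hasFDerivAt)
    (fun n y hy => norm_fderiv_le_of_bounded (by positivity) ((hd n).mono (hsub y hy))
      (fun z hz => hb n z (hsub y hy hz))) hx0
    (Summable.of_norm_bounded hu (fun n => hb n x hx)) hx0
  exact key.differentiableAt.differentiableWithinAt

/-- Splitting off a power of `R` makes the errors along an orbit with `Re xₙ ≥ R + n/2` both summable
in `n` and small as `R → ∞`. -/
lemma rpow_tail_bound {η R t : ℝ} (hη : 0 < η) (hR : 1 ≤ R) (n : ℕ) (ht : R + n / 2 ≤ t) :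
    t ^ (-(1 + η)) ≤ R ^ (-(η / 2)) * (((n : ℝ) + 1) / 2) ^ (-(1 + η / 2)) := by
  have hn : (0 : ℝ) ≤ n := n.cast_nonneg
  have ht0 : 0 < t := by linarith
  rw [show -(1 + η) = -(η / 2) + -(1 + η / 2) by ring, Real.rpow_add ht0]
  gcongr ?_ * ?_
  · exact Real.rpow_le_rpow_of_nonpos (by linarith) (by linarith) (by linarith)
  · exact Real.rpow_le_rpow_of_nonpos (by linarith) (by linarith) (by linarith)

lemma summable_tail {η : ℝ} (hη : 0 < η) :
    Summable (fun n : ℕ => (((n : ℝ) + 1) / 2) ^ (-(1 + η / 2))) := by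
  have h := (summable_nat_add_iff 1).2
    ((Real.summable_nat_rpow (p := -(1 + η / 2))).2 (by linarith))
  have := h.div_const ((2 : ℝ) ^ (-(1 + η / 2)))
  refine this.congr (fun n => ?_)
  rw [Real.div_rpow (by positivity) (by norm_num)]
  push_cast
  rfl

/-- On `{Re x > R, |y| < M}`, for every `M` and a suitable `R`, the map `T` is holomorphic, moves `x` by
approximately `1`, and is `(X, y) ↦ (X + 1, y)` in the coordinate `X = Xc x`, up to an error
`O(|x|^{-(1+η)})`. -/
def TailHyp (T : ℂ × ℂ → ℂ × ℂ) (η : ℝ) : Prop :=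
  ∀ M : ℝ, ∃ R C : ℝ, 1 ≤ R ∧ 0 ≤ C ∧ ∀ d ∈ Dom R M, DifferentiableAt ℂ T d ∧
    ‖(T d).1 - d.1 - 1‖ ≤ 1 / 2 ∧ ‖Xc (T d).1 - Xc d.1 - 1‖ ≤ C * ‖d.1‖ ^ (-(1 + η)) ∧
    ‖(T d).2 - d.2‖ ≤ C * ‖d.1‖ ^ (-(1 + η))

/-- The `n`-th approximation `(Xc xₙ - n, yₙ)` to the Fatou coordinates, where `(xₙ, yₙ) = Tⁿ(d)`. -/
noncomputable def fatouSeq (T : ℂ × ℂ → ℂ × ℂ) (n : ℕ) (d : ℂ × ℂ) : ℂ × ℂ :=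
  (Xc (T^[n] d).1 - n, (T^[n] d).2)

lemma differentiableAt_Xc {x : ℂ} (hx : 0 < x.re) : DifferentiableAt ℂ Xc x := by
  unfold Xc
  have : x ∈ Complex.slitPlane := Or.inl hx
  fun_prop (disch := assumption)

/-- The approximations `fatouSeq T n` converge on `Dom R M` once `R` is large, and the holomorphic limit
is arbitrarily close to `(Xc x, y)`. -/
lemma fatou_local {T : ℂ × ℂ → ℂ × ℂ} {η : ℝ} (hη : 0 < η) (hT : TailHyp T η) (M δ : ℝ)
    (hδ : 0 < δ) : ∃ R₀ : ℝ, 1 ≤ R₀ ∧ ∀ R, R₀ ≤ R →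
      (∀ d ∈ Dom R M, ∀ n : ℕ, T^[n] d ∈ Dom (R + n / 2) (M + 1)) ∧
      ∃ Φ : ℂ × ℂ → ℂ × ℂ, DifferentiableOn ℂ Φ (Dom R M) ∧
        ∀ d ∈ Dom R M, Tendsto (fun n => fatouSeq T n d) atTop (nhds (Φ d)) ∧
          ‖Φ d - (Xc d.1, d.2)‖ ≤ δ := by
  obtain ⟨R1, C, hR1, hC, hT⟩ := hT (M + 1)
  set b : ℕ → ℝ := fun n => (((n : ℝ) + 1) / 2) ^ (-(1 + η / 2)) with hb
  have hbs : Summable b := summable_tail hη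
  have hb0 : ∀ n, 0 ≤ b n := fun n => by positivity
  -- for large `R` the sum of all errors along an orbit is below `min δ 1`
  have hlim : Tendsto (fun R : ℝ => C * R ^ (-(η / 2)) * ∑' n, b n) atTop (nhds 0) := by
    have := (tendsto_rpow_neg_atTop (y := η / 2) (by positivity))
    simpa using (this.const_mul C).mul_const (∑' n, b n)
  have hev := (hlim.eventually (gt_mem_nhds (show 0 < min δ 1 by positivity))).and
    (eventually_ge_atTop R1)
  obtain ⟨R₀, hR₀⟩ := eventually_atTop.1 hev
  refine ⟨max R₀ 1, le_max_right _ _, fun R hR => ?_⟩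
  obtain ⟨hsmall, hRR1⟩ := hR₀ R ((le_max_left _ _).trans hR)
  have hR1' : 1 ≤ R := (le_max_right _ _).trans hR
  set u : ℕ → ℝ := fun n => C * R ^ (-(η / 2)) * b n with hu
  have hus : Summable u := hbs.mul_left _
  have hu0 : ∀ n, 0 ≤ u n := fun n => by positivity
  have husum : ∑' n, u n < min δ 1 := by rw [tsum_mul_left]; exact hsmall
  have hpart : ∀ n, ∑ k ∈ Finset.range n, u k < 1 := fun n =>
    ((hus.sum_le_tsum _ (fun i _ => hu0 i)).trans_lt husum).trans_le (min_le_right _ _)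
  have herr : ∀ n : ℕ, ∀ x : ℂ, R + n / 2 < x.re → C * ‖x‖ ^ (-(1 + η)) ≤ u n := by
    intro n x hx
    have := rpow_tail_bound hη hR1' n (hx.le.trans (Complex.re_le_norm x))
    calc C * ‖x‖ ^ (-(1 + η)) ≤ C * (R ^ (-(η / 2)) * b n) := by gcongr
      _ = u n := by simp only [hu]; ring
  have horb : ∀ d ∈ Dom R M, ∀ n : ℕ, R + n / 2 < (T^[n] d).1.re ∧
      ‖(T^[n] d).2‖ < M + ∑ k ∈ Finset.range n, u k := by
    intro d hd n
    induction n with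
    | zero => simpa [Dom] using hd
    | succ n ih =>
      have hn : (0 : ℝ) ≤ n := n.cast_nonneg
      have hmem : T^[n] d ∈ Dom R1 (M + 1) :=
        ⟨by linarith [ih.1], ih.2.trans (by linarith [hpart n])⟩
      obtain ⟨-, h1, -, h2⟩ := hT _ hmem
      rw [Function.iterate_succ_apply']
      constructor
      · have := (Complex.abs_re_le_norm _).trans h1
        simp only [Complex.sub_re, Complex.one_re] at this
        push_cast
        linarith [(abs_le.1 this).1, ih.1]
      · rw [Finset.sum_range_succ]
        have h3 := h2.trans (herr n _ ih.1)
        have h4 := norm_add_le ((T (T^[n] d)).2 - (T^[n] d).2) (T^[n] d).2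
        rw [sub_add_cancel] at h4
        linarith [ih.2]
  have horb' : ∀ d ∈ Dom R M, ∀ n : ℕ, T^[n] d ∈ Dom (R + n / 2) (M + 1) := fun d hd n =>
    ⟨(horb d hd n).1, (horb d hd n).2.trans (by linarith [hpart n])⟩
  refine ⟨horb', ?_⟩
  have hR1mem : ∀ d ∈ Dom R M, ∀ n : ℕ, T^[n] d ∈ Dom R1 (M + 1) := fun d hd n =>
    ⟨by have : (0 : ℝ) ≤ n := n.cast_nonneg
        linarith [(horb d hd n).1], (horb' d hd n).2⟩
  have hdiffT : ∀ n : ℕ, ∀ d ∈ Dom R M, DifferentiableAt ℂ (T^[n]) d := by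
    intro n
    induction n with
    | zero => intro d _; simp
    | succ n ih =>
      intro d hd
      rw [Function.iterate_succ']
      exact DifferentiableAt.comp d (hT _ (hR1mem d hd n)).1 (ih d hd)
  have hdiff : ∀ n : ℕ, DifferentiableOn ℂ (fatouSeq T n) (Dom R M) := by
    intro n d hd
    have hre : 0 < (T^[n] d).1.re := by linarith [(hR1mem d hd n).1]
    have h1 := hdiffT n d hd
    have h2 : DifferentiableAt ℂ (fun e => Xc (T^[n] e).1) d :=
      DifferentiableAt.comp d (f := fun e => (T^[n] e).1) (differentiableAt_Xc hre) h1.fst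
    exact ((h2.sub_const _).prodMk h1.snd).differentiableWithinAt
  -- the limit is obtained as a telescoping series
  set inc : ℕ → ℂ × ℂ → ℂ × ℂ := fun n d => fatouSeq T (n + 1) d - fatouSeq T n d with hinc
  have hincb : ∀ n, ∀ d ∈ Dom R M, ‖inc n d‖ ≤ u n := by
    intro n d hd
    obtain ⟨-, -, h1, h2⟩ := hT _ (hR1mem d hd n)
    have h3 := herr n _ (horb d hd n).1
    simp only [hinc, fatouSeq, Prod.norm_def, Function.iterate_succ_apply', max_le_iff,
      Prod.fst_sub, Prod.snd_sub]
    refine ⟨?_, h2.trans h3⟩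
    refine le_trans (le_of_eq ?_) (h1.trans h3)
    congr 1
    push_cast
    ring
  refine ⟨fun d => fatouSeq T 0 d + ∑' n, inc n d, ?_, ?_⟩
  · exact (hdiff 0).add (differentiableOn_tsum_of_bounded (isOpen_Dom R M) hus
      (fun n => (hdiff (n + 1)).sub (hdiff n)) hincb)
  · intro d hd
    have hs : Summable (fun n => inc n d) := Summable.of_norm_bounded hus (fun n => hincb n d hd)
    constructor
    · have := (hs.hasSum.tendsto_sum_nat).const_add (fatouSeq T 0 d)
      refine this.congr (fun n => ?_)
      simp only [hinc]
      rw [Finset.sum_range_sub (fun n => fatouSeq T n d)]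
      abel
    · have h0 : fatouSeq T 0 d = (Xc d.1, d.2) := by simp [fatouSeq]
      beta_reduce
      rw [h0, add_sub_cancel_left]
      exact (tsum_of_norm_bounded hus.hasSum (fun n => hincb n d hd)).trans
        (husum.le.trans (min_le_left _ _))

/-! ### The Fatou map is a biholomorphism onto its image -/

lemma log_lipschitz {R : ℝ} (hR : 4 ≤ R) {x y : ℂ} (hx : R < x.re) (hy : R < y.re) :
    ‖Complex.log x / 2 - Complex.log y / 2‖ ≤ 1 / 8 * ‖x - y‖ := by
  have h := Convex.norm_image_sub_le_of_norm_hasDerivWithin_le (𝕜 := ℂ)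
    (f := fun z => Complex.log z / 2) (f' := fun z => z⁻¹ / 2)
    (s := {z : ℂ | R < z.re}) (C := 1 / 8) (x := y) (y := x) ?_ ?_ (convex_halfSpace_re_gt R) hy hx
  · exact h
  · intro z hz
    have hz' : z ∈ Complex.slitPlane := Or.inl (by have : R < z.re := hz; linarith)
    exact ((Complex.hasDerivAt_log hz').div_const 2).hasDerivWithinAt
  · intro z hz
    have hz' : R < z.re := hz
    have h4 : 4 ≤ ‖z‖ := by linarith [Complex.re_le_norm z]
    rw [norm_div, norm_inv]
    have : ‖z‖⁻¹ ≤ 4⁻¹ := inv_anti₀ (by norm_num) h4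
    simp only [Complex.norm_ofNat]
    linarith

/-- `z + n - ½ log n` is an approximate solution `x` of `Xc x = z + n`. -/
lemma tendsto_log_shift (z : ℂ) :
    Tendsto (fun n : ℕ => Complex.log (z + n - Complex.log n / 2) - Complex.log n) atTop
      (nhds 0) := by
  have hn : Tendsto (fun n : ℕ => (n : ℝ)) atTop atTop := tendsto_natCast_atTop_atTop
  have h1 : Tendsto (fun n : ℕ => ((Real.log n / n : ℝ) : ℂ)) atTop (nhds 0) := by
    have h := (Real.isLittleO_log_id_atTop.tendsto_div_nhds_zero).comp hn
    have := (Complex.continuous_ofReal.tendsto 0).comp h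
    simpa [Function.comp_def] using this
  have h2 : Tendsto (fun n : ℕ => ((1 / (n : ℝ) : ℝ) : ℂ)) atTop (nhds 0) := by
    have := (Complex.continuous_ofReal.tendsto 0).comp tendsto_one_div_atTop_nhds_zero_nat
    simpa [Function.comp_def] using this
  have h3 : Tendsto (fun n : ℕ => z * ((1 / (n : ℝ) : ℝ) : ℂ) + 1
      - ((Real.log n / n : ℝ) : ℂ) / 2) atTop (nhds 1) := by
    have := ((h2.const_mul z).add_const 1).sub (h1.div_const 2)
    simpa using this
  have h4 := (continuousAt_clog (x := 1) Complex.one_mem_slitPlane).tendsto.comp h3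
  rw [Complex.log_one] at h4
  refine h4.congr' ?_
  have hne : ∀ᶠ n : ℕ in atTop, z * ((1 / (n : ℝ) : ℝ) : ℂ) + 1
      - ((Real.log n / n : ℝ) : ℂ) / 2 ≠ 0 := h3.eventually_ne one_ne_zero
  filter_upwards [hne, eventually_gt_atTop 0] with n hn hn0
  have hn0' : (0 : ℝ) < n := Nat.cast_pos.2 hn0
  have hnc : (n : ℂ) ≠ 0 := Nat.cast_ne_zero.2 hn0.ne'
  have heq : z + n - Complex.log n / 2 = ((n : ℝ) : ℂ) * (z * ((1 / (n : ℝ) : ℝ) : ℂ) + 1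
      - ((Real.log n / n : ℝ) : ℂ) / 2) := by
    push_cast
    field_simp
  rw [heq, Complex.log_ofReal_mul hn0' hn, Function.comp_apply, ← Complex.natCast_log]
  ring

/-- On a domain `Dom R M` the limit `Φ` of the Fatou approximations is a biholomorphism onto an open
set, with inverse `S`; every `ξ` with `|ξ₂| < M - 1` reaches this image after a translation by
some natural number in the first variable. Injectivity and openness hold because `Φ - id` is a
contraction with constant `1/2`. -/
lemma fatou_biholo {T : ℂ × ℂ → ℂ × ℂ} {η : ℝ} (hη : 0 < η) (hT : TailHyp T η) (M : ℝ) :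
    ∃ (R : ℝ) (Φ S : ℂ × ℂ → ℂ × ℂ), 1 ≤ R ∧
      (∀ d ∈ Dom R M, ∀ n : ℕ, T^[n] d ∈ Dom (R + n / 2 - 1) (M + 2)) ∧
      (∀ d ∈ Dom R M, Tendsto (fun n => fatouSeq T n d) atTop (nhds (Φ d))) ∧
      DifferentiableOn ℂ Φ (Dom R M) ∧ IsOpen (Φ '' Dom R M) ∧
      DifferentiableOn ℂ S (Φ '' Dom R M) ∧ (∀ d ∈ Dom R M, S (Φ d) = d) ∧
      ∀ ξ : ℂ × ℂ, ‖ξ.2‖ + 1 < M → ∃ n : ℕ, (ξ.1 + n, ξ.2) ∈ Φ '' Dom R M := by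
  obtain ⟨R₀, hR₀, hloc⟩ := fatou_local hη hT (M + 1) (1 / 8) (by norm_num)
  set R := max R₀ 4 with hRdef
  have hR4 : 4 ≤ R := le_max_right _ _
  obtain ⟨horb, Φ, hΦd, hΦ⟩ := hloc R (le_max_left _ _)
  set D := Dom (R + 1) M with hD
  have hDball : ∀ d ∈ D, Metric.closedBall d 1 ⊆ Dom R (M + 1) := fun d hd =>
    ball_subset_Dom (by simpa using hd)
  have hDsub : D ⊆ Dom R (M + 1) := fun d hd => hDball d hd (Metric.mem_closedBall_self (by norm_num))
  have hDo : IsOpen D := isOpen_Dom _ _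
  -- `Φ` minus its model `(Xc x, y)`: bounded by `1/8`, hence with small derivative
  set e : ℂ × ℂ → ℂ × ℂ := fun d => Φ d - (Xc d.1, d.2) with he
  have hed : DifferentiableOn ℂ e (Dom R (M + 1)) := by
    intro d hd
    have h2 : DifferentiableAt ℂ (fun d : ℂ × ℂ => Xc d.1) d :=
      DifferentiableAt.comp d (f := fun d : ℂ × ℂ => d.1)
        (differentiableAt_Xc (by linarith [hd.1])) differentiableAt_fst
    exact (hΦd d hd).sub (h2.prodMk differentiableAt_snd).differentiableWithinAt
  have heL : ∀ x ∈ D, ∀ y ∈ D, ‖e x - e y‖ ≤ 1 / 4 * ‖x - y‖ := by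
    intro x hx y hy
    refine Convex.norm_image_sub_le_of_norm_fderiv_le (𝕜 := ℂ) (s := D) ?_ ?_ (convex_Dom _ _) hy hx
    · exact fun z hz => hed.differentiableAt ((isOpen_Dom _ _).mem_nhds (hDsub hz))
    · intro z hz
      have hb := Metric.ball_subset_closedBall.trans (hDball z hz)
      refine (norm_fderiv_le_of_bounded (r := 1) (δ := 1 / 8) one_pos (hed.mono hb)
        (fun w hw => (hΦ w (hb hw)).2)).trans (by norm_num)
  have hlip : ∀ x ∈ D, ∀ y ∈ D, ‖Φ x - Φ y - (x - y)‖ ≤ 1 / 2 * ‖x - y‖ := by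
    intro x hx y hy
    have heq : Φ x - Φ y - (x - y) = (e x - e y) +
        (Complex.log x.1 / 2 - Complex.log y.1 / 2, 0) := by
      simp only [he, Xc]
      ext <;> simp <;> ring
    have h1 := log_lipschitz hR4 (by linarith [hx.1] : R < x.1.re) (by linarith [hy.1] : R < y.1.re)
    have h2 : ‖((Complex.log x.1 / 2 - Complex.log y.1 / 2, 0) : ℂ × ℂ)‖ ≤ 1 / 8 * ‖x - y‖ := by
      rw [Prod.norm_def]
      simp only [norm_zero]
      refine max_le (h1.trans ?_) (by positivity)
      gcongr
      exact norm_fst_le (x - y)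
    rw [heq]
    have := norm_nonneg (x - y)
    linarith [norm_add_le (e x - e y) ((Complex.log x.1 / 2 - Complex.log y.1 / 2, 0) : ℂ × ℂ),
      heL x hx y hy]
  set I := ContinuousLinearEquiv.refl ℂ (ℂ × ℂ) with hI
  have hA : ApproximatesLinearOn Φ (I : ℂ × ℂ →L[ℂ] ℂ × ℂ) D (1 / 2) := by
    intro x hx y hy
    simpa [hI] using hlip x hx y hy
  have hN : ‖(I.symm : ℂ × ℂ →L[ℂ] ℂ × ℂ)‖₊ = 1 := by
    rw [← NNReal.coe_inj]
    simp [hI]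
  have hc : Subsingleton (ℂ × ℂ) ∨ (1 / 2 : NNReal) < ‖(I.symm : ℂ × ℂ →L[ℂ] ℂ × ℂ)‖₊⁻¹ := by
    right
    rw [hN, ← NNReal.coe_lt_coe]
    norm_num
  set P := hA.toOpenPartialHomeomorph Φ D hc hDo with hP
  refine ⟨R + 1, Φ, P.symm, by linarith, ?_, fun d hd => (hΦ d (hDsub hd)).1, hΦd.mono hDsub,
    P.open_target, ?_, fun d hd => P.left_inv hd, ?_⟩
  · intro d hd n
    have := horb d (hDsub hd) n
    exact ⟨by linarith [this.1], by linarith [this.2]⟩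
  · intro y hy
    have hy' : y ∈ P.target := hy
    have hz : P.symm y ∈ D := P.map_target hy'
    have hdz : DifferentiableAt ℂ Φ (P.symm y) :=
      hΦd.differentiableAt ((isOpen_Dom _ _).mem_nhds (hDsub hz))
    have hnorm : ‖fderiv ℂ Φ (P.symm y) - 1‖ ≤ 1 / 2 := by
      have h1 : HasFDerivAt (fun x => Φ x - x) (fderiv ℂ Φ (P.symm y) - 1) (P.symm y) :=
        hdz.hasFDerivAt.sub (hasFDerivAt_id _)
      refine h1.le_of_lip' (by norm_num) ?_
      filter_upwards [hDo.mem_nhds hz] with x hx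
      have := hlip x hx _ hz
      rwa [show Φ x - x - (Φ (P.symm y) - P.symm y) = Φ x - Φ (P.symm y) - (x - P.symm y) by abel]
    set B : ℂ × ℂ →L[ℂ] ℂ × ℂ := 1 - fderiv ℂ Φ (P.symm y) with hB
    have hBn : ‖B‖ < 1 := by
      rw [hB, norm_sub_rev]
      linarith
    set U := ContinuousLinearEquiv.ofUnit (Units.oneSub B hBn) with hU
    have hUeq : (U : ℂ × ℂ →L[ℂ] ℂ × ℂ) = fderiv ℂ Φ (P.symm y) := by
      refine ContinuousLinearMap.ext fun v => ?_
      change ((Units.oneSub B hBn : (ℂ × ℂ →L[ℂ] ℂ × ℂ)ˣ) : ℂ × ℂ →L[ℂ] ℂ × ℂ) v = _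
      simp [hB]
    have hf : HasFDerivAt Φ (U : ℂ × ℂ →L[ℂ] ℂ × ℂ) (P.symm y) := by
      rw [hUeq]; exact hdz.hasFDerivAt
    refine (HasFDerivAt.of_local_left_inverse (P.continuousAt_symm hy') hf ?_
      ).differentiableAt.differentiableWithinAt
    filter_upwards [P.open_target.mem_nhds hy'] with w hw
    exact P.right_inv hw
  · intro ξ hξ
    -- surjectivity: the point `b` below is an approximate preimage, and `Φ` covers a ball around `Φ b`
    have hlog := tendsto_log_shift ξ.1
    have hre : Tendsto (fun n : ℕ => (ξ.1 + n - Complex.log n / 2).re) atTop atTop := by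
      have h0 : Tendsto (fun n : ℕ => ξ.1.re + (n : ℝ) / 2) atTop atTop :=
        tendsto_atTop_add_const_left _ _
          (tendsto_natCast_atTop_atTop.atTop_div_const (by norm_num))
      refine tendsto_atTop_mono (fun n => ?_) h0
      have h1 : Real.log n ≤ n := (Real.log_le_self n.cast_nonneg)
      rw [← Complex.natCast_log]
      simp only [Complex.sub_re, Complex.add_re, Complex.natCast_re, Complex.div_ofNat_re,
        Complex.ofReal_re]
      linarith
    obtain ⟨n, h1, h2⟩ := ((hre.eventually_gt_atTop (R + 2)).and
      (hlog.eventually (Metric.ball_mem_nhds 0 (show (0 : ℝ) < 1 / 8 by norm_num)))).exists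
    refine ⟨n, ?_⟩
    set b : ℂ × ℂ := (ξ.1 + n - Complex.log n / 2, ξ.2) with hb
    have hbD : Metric.closedBall b 1 ⊆ D := ball_subset_Dom (by
      refine ⟨?_, ?_⟩
      · simp only [hb]; linarith
      · simp only [hb]; linarith)
    have hbm : b ∈ D := hbD (Metric.mem_closedBall_self (by norm_num))
    have hsub := hA.closedBall_subset_target hc hDo (zero_le_one) hbD
    apply hsub
    rw [hN, mem_closedBall_iff_norm]
    have h3 := (hΦ b (hDsub hbm)).2
    have h4 : ‖((ξ.1 + n, ξ.2) : ℂ × ℂ) - (Xc b.1, b.2)‖ ≤ 1 / 8 := by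
      rw [dist_zero_right] at h2
      have : ((ξ.1 + n, ξ.2) : ℂ × ℂ) - (Xc b.1, b.2) =
        (-(Complex.log (ξ.1 + n - Complex.log n / 2) - Complex.log n) / 2, 0) := by
        simp only [hb, Xc]
        ext <;> simp
        ring
      rw [this, Prod.norm_def]
      simp only [norm_zero, norm_div, norm_neg, Complex.norm_ofNat]
      exact max_le (by linarith [norm_nonneg (Complex.log (ξ.1 + n - Complex.log n / 2) - Complex.log n)]) (by norm_num)
    have h5 := norm_sub_le_norm_sub_add_norm_sub ((ξ.1 + n, ξ.2) : ℂ × ℂ) (Xc b.1, b.2) (Φ b)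
    rw [norm_sub_rev (Xc b.1, b.2)] at h5
    norm_num
    linarith

/-! ### The planar map and its variation in the second variable -/

/-- The factor `exp(ω - v)`. -/
noncomputable def Ef (q : ℂ × ℂ) : ℂ := Complex.exp (q.2 - q.1)

/-- The planar automorphism induced by `F` in the variables `v = 2a·zt`, `ω = 2a·w`, with
`γ = c/(2a)`: `v ↦ v₁ = v·exp(-v·E)` and `ω ↦ (ω - v + v·E)·exp(-(1+γ)v₁) + v₁²`, where
`E = exp(ω - v)`. -/
noncomputable def Gm (γ : ℂ) (q : ℂ × ℂ) : ℂ × ℂ :=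
  (q.1 * Complex.exp (-(q.1 * Ef q)),
    (q.2 - q.1 + q.1 * Ef q) * Complex.exp (-((1 + γ) * (q.1 * Complex.exp (-(q.1 * Ef q)))))
      + (q.1 * Complex.exp (-(q.1 * Ef q))) ^ 2)

/-- With `(v₁, ω₁) = G(v, ω)`, the normalized distance `(v₁/v)^{-γ}(ω₁ - v₁² h(v₁))` of the image point
to the curve `ω = v² h(v)`. -/
noncomputable def Bf (γ : ℂ) (h : ℂ → ℂ) (q : ℂ × ℂ) : ℂ :=
  Complex.exp (γ * (q.1 * Ef q)) * ((Gm γ q).2 - (Gm γ q).1 ^ 2 * h (Gm γ q).1)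

/-- The exponent for which the part of `Bf` that does not involve `v₁²` has the factor `exp(v·kf)`. -/
noncomputable def kf (γ : ℂ) (q : ℂ × ℂ) : ℂ :=
  γ * Ef q - (1 + γ) * Complex.exp (-(q.1 * Ef q))

/-- The coefficient of `v²` in `Bf`. -/
noncomputable def mf (γ : ℂ) (h : ℂ → ℂ) (q : ℂ × ℂ) : ℂ :=
  Complex.exp ((γ - 2) * (q.1 * Ef q)) * (1 - h (q.1 * Complex.exp (-(q.1 * Ef q))))

lemma Bf_eq (γ : ℂ) (h : ℂ → ℂ) (q : ℂ × ℂ) :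
    Bf γ h q = (q.2 - q.1 + q.1 * Ef q) * Complex.exp (q.1 * kf γ q) + q.1 ^ 2 * mf γ h q := by
  have h1 : Complex.exp (q.1 * kf γ q) = Complex.exp (γ * (q.1 * Ef q)) *
      Complex.exp (-((1 + γ) * (q.1 * Complex.exp (-(q.1 * Ef q))))) := by
    rw [← Complex.exp_add]; congr 1; unfold kf; ring
  have h2 : Complex.exp ((γ - 2) * (q.1 * Ef q)) = Complex.exp (γ * (q.1 * Ef q)) *
      Complex.exp (-(q.1 * Ef q)) ^ 2 := by
    rw [← Complex.exp_nat_mul, ← Complex.exp_add]; congr 1; push_cast; ring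
  unfold Bf mf Gm
  rw [h1, h2]
  ring

lemma isBigO_of_differentiable {E : Type*} [NormedAddCommGroup E] [NormedSpace ℂ E] {f : E → ℂ}
    (hf : DifferentiableAt ℂ f 0) (h0 : f 0 = 0) :
    f =O[𝓝 0] (fun q => q) := by
  simpa [h0] using hf.isBigO_sub

lemma exp_sub_isBigO : (fun y : ℂ => Complex.exp y - 1 - y) =O[𝓝 0] (fun y => y ^ 2) := by
  refine IsBigO.of_bound 1 ?_
  filter_upwards [Metric.closedBall_mem_nhds (0 : ℂ) one_pos] with y hy
  rw [one_mul, norm_pow]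
  exact Complex.norm_exp_sub_one_sub_id_le (by simpa using hy)

lemma differentiable_Ef : Differentiable ℂ Ef := by unfold Ef; fun_prop

lemma differentiable_kf (γ : ℂ) : Differentiable ℂ (kf γ) := by
  have := differentiable_Ef
  unfold kf; fun_prop

lemma differentiable_mf (γ : ℂ) {h : ℂ → ℂ} (hh : Differentiable ℂ h) :
    Differentiable ℂ (mf γ h) := by
  have := differentiable_Ef
  unfold mf; fun_prop

lemma contDiff_mf (γ : ℂ) {h : ℂ → ℂ} (hh : Differentiable ℂ h) :
    ContDiff ℂ 1 (mf γ h) := by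
  have h1 : ContDiff ℂ 1 h := hh.contDiff
  unfold mf Ef
  fun_prop

/-- The derivative in `ω` of `(ω - v + v·E)·exp(v·kf)`, the part of `Bf` that does not depend on `h`. -/
noncomputable def Aω (γ : ℂ) (q : ℂ × ℂ) : ℂ :=
  (1 + q.1 * Ef q) * Complex.exp (q.1 * kf γ q) + (q.2 - q.1 + q.1 * Ef q) *
    (Complex.exp (q.1 * kf γ q) * (q.1 * (γ * Ef q + (1 + γ) * (q.1 * Ef q *
      Complex.exp (-(q.1 * Ef q))))))

lemma hasDerivAt_A (γ v ω : ℂ) :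
    HasDerivAt (fun ω => (ω - v + v * Ef (v, ω)) * Complex.exp (v * kf γ (v, ω)))
      (Aω γ (v, ω)) ω := by
  have hE : HasDerivAt (fun ω => Ef (v, ω)) (Ef (v, ω)) ω := by
    simpa [Ef] using ((hasDerivAt_id ω).sub_const v).cexp
  have hk : HasDerivAt (fun ω => kf γ (v, ω)) (γ * Ef (v, ω) + (1 + γ) * (v * Ef (v, ω) *
      Complex.exp (-(v * Ef (v, ω))))) ω := by
    have := (hE.const_mul γ).sub (((hE.const_mul v).neg.cexp).const_mul (1 + γ))
    refine this.congr_deriv ?_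
    simp only [Pi.neg_apply]
    ring
  have := (((hasDerivAt_id ω).sub_const v).add (hE.const_mul v)).mul (hk.const_mul v).cexp
  refine this.congr_deriv ?_
  simp [Aω]

/-- The terms of `Aω - 1` that are linear in `v` alone cancel, since `Ef + kf` vanishes at the origin. -/
lemma Aω_isBigO (γ : ℂ) :
    (fun q => Aω γ q - 1) =O[𝓝 (0 : ℂ × ℂ)] (fun q => ‖q.1‖ * ‖q‖) := by
  have hE := differentiable_Ef
  have hk := differentiable_kf γ
  have hcont : ContinuousAt (fun q : ℂ × ℂ => q.1 * kf γ q) 0 :=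
    (continuous_fst.mul hk.continuous).continuousAt
  have h0 : Tendsto (fun q : ℂ × ℂ => q.1 * kf γ q) (𝓝 0) (𝓝 0) := by
    simpa using hcont.tendsto
  have hfst : (fun q : ℂ × ℂ => q.1) =O[𝓝 (0 : ℂ × ℂ)] (fun q : ℂ × ℂ => ‖q‖) :=
    (isBigO_of_differentiable (f := fun q : ℂ × ℂ => q.1) differentiableAt_fst rfl).norm_right
  have hkb : (fun q => kf γ q) =O[𝓝 (0 : ℂ × ℂ)] (fun _ => (1 : ℝ)) :=
    (hk.continuous.tendsto 0).isBigO_one ℝ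
  have h1 : (fun q : ℂ × ℂ => Complex.exp (q.1 * kf γ q) - 1 - q.1 * kf γ q)
      =O[𝓝 0] (fun q => ‖q.1‖ * ‖q‖) := by
    refine (exp_sub_isBigO.comp_tendsto h0).trans ?_
    have : (fun q : ℂ × ℂ => q.1 * (q.1 * (kf γ q * kf γ q))) =O[𝓝 0]
        (fun q => ‖q.1‖ * (‖q‖ * (1 * 1))) :=
      (isBigO_refl _ _).norm_right.mul (hfst.mul (hkb.mul hkb))
    refine (this.congr ?_ ?_)
    · intro q; simp only [Function.comp]; ring
    · intro q; ring
  have h2 : (fun q : ℂ × ℂ => Ef q * (Complex.exp (q.1 * kf γ q) - 1) + (Ef q + kf γ q) +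
      (q.2 - q.1 + q.1 * Ef q) * (Complex.exp (q.1 * kf γ q) * (γ * Ef q + (1 + γ) * (q.1 * Ef q *
      Complex.exp (-(q.1 * Ef q)))))) =O[𝓝 0] (fun q => ‖q‖) := by
    refine (isBigO_of_differentiable ?_ ?_).norm_right
    · have : Differentiable ℂ (fun q : ℂ × ℂ => Ef q * (Complex.exp (q.1 * kf γ q) - 1) +
        (Ef q + kf γ q) + (q.2 - q.1 + q.1 * Ef q) * (Complex.exp (q.1 * kf γ q) * (γ * Ef q +
        (1 + γ) * (q.1 * Ef q * Complex.exp (-(q.1 * Ef q)))))) := by fun_prop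
      exact this 0
    · simp [Ef, kf]
  have h3 := h1.add (((isBigO_refl (fun q : ℂ × ℂ => q.1) (𝓝 0)).norm_right).mul h2)
  refine h3.congr_left (fun q => ?_)
  unfold Aω
  ring

/-- In the variable `ω`, the function `Bf` differs from the identity by a Lipschitz function with
constant `O(|v|(|v| + |ω|))`. -/
lemma Bf_diff (γ : ℂ) {h : ℂ → ℂ} (hh : Differentiable ℂ h) :
    ∃ C r : ℝ, 0 < C ∧ 0 < r ∧ ∀ v ω ω' : ℂ, ∀ ρ : ℝ, ‖v‖ < r → ρ < r → ‖ω‖ ≤ ρ → ‖ω'‖ ≤ ρ →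
      ‖Bf γ h (v, ω) - Bf γ h (v, ω') - (ω - ω')‖ ≤ C * ‖v‖ * (‖v‖ + ρ) * ‖ω - ω'‖ := by
  obtain ⟨C₁, hC₁⟩ := (Aω_isBigO γ).bound
  obtain ⟨K, t, ht, hK⟩ := (contDiff_mf γ hh).contDiffAt (x := 0).exists_lipschitzOnWith
  obtain ⟨r, hr, hball⟩ := Metric.mem_nhds_iff.1 (inter_mem hC₁ ht)
  refine ⟨max C₁ 0 + K + 1, r, by positivity, hr, ?_⟩
  intro v ω ω' ρ hv hρ hω hω'
  have hmem : ∀ z : ℂ, ‖z‖ ≤ ρ → ((v, z) : ℂ × ℂ) ∈ Metric.ball (0 : ℂ × ℂ) r := by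
    intro z hz
    rw [mem_ball_zero_iff, Prod.norm_def]
    exact max_lt hv (hz.trans_lt hρ)
  have hρ0 : 0 ≤ ρ := (norm_nonneg _).trans hω
  have hA : ‖((ω - v + v * Ef (v, ω)) * Complex.exp (v * kf γ (v, ω)) - ω) -
      ((ω' - v + v * Ef (v, ω')) * Complex.exp (v * kf γ (v, ω')) - ω')‖ ≤
      (max C₁ 0 * (‖v‖ * (‖v‖ + ρ))) * ‖ω - ω'‖ := by
    refine Convex.norm_image_sub_le_of_norm_hasDerivWithin_le (𝕜 := ℂ)
      (f := fun ω => (ω - v + v * Ef (v, ω)) * Complex.exp (v * kf γ (v, ω)) - ω)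
      (f' := fun ω => Aω γ (v, ω) - 1) (s := Metric.closedBall 0 ρ) ?_ ?_ (convex_closedBall _ _)
      (by simpa using hω') (by simpa using hω)
    · intro z _
      exact ((hasDerivAt_A γ v z).sub (hasDerivAt_id z)).hasDerivWithinAt
    · intro z hz
      have hz' : ‖z‖ ≤ ρ := by simpa using hz
      have h1 : ‖Aω γ (v, z) - 1‖ ≤ C₁ * ‖‖v‖ * ‖((v, z) : ℂ × ℂ)‖‖ := (hball (hmem z hz')).1
      refine h1.trans ?_
      rw [norm_mul, norm_norm, norm_norm]
      gcongr
      · exact le_max_left _ _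
      · rw [Prod.norm_def]
        exact max_le (by simp [hρ0]) (by simp only; linarith [norm_nonneg v])
  have hm : ‖mf γ h (v, ω) - mf γ h (v, ω')‖ ≤ K * ‖ω - ω'‖ := by
    have := hK.dist_le_mul _ (hball (hmem ω hω)).2 _ (hball (hmem ω' hω')).2
    rw [dist_eq_norm, dist_eq_norm, Prod.mk_sub_mk, Prod.norm_def] at this
    simpa using this
  rw [Bf_eq, Bf_eq]
  simp only
  have heq : (ω - v + v * Ef (v, ω)) * Complex.exp (v * kf γ (v, ω)) + v ^ 2 * mf γ h (v, ω) -
      ((ω' - v + v * Ef (v, ω')) * Complex.exp (v * kf γ (v, ω')) + v ^ 2 * mf γ h (v, ω')) -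
      (ω - ω') = (((ω - v + v * Ef (v, ω)) * Complex.exp (v * kf γ (v, ω)) - ω) -
      ((ω' - v + v * Ef (v, ω')) * Complex.exp (v * kf γ (v, ω')) - ω')) +
      v ^ 2 * (mf γ h (v, ω) - mf γ h (v, ω')) := by ring
  rw [heq]
  refine (norm_add_le _ _).trans ?_
  rw [norm_mul, norm_pow]
  have h5 : ‖v‖ ^ 2 * ‖mf γ h (v, ω) - mf γ h (v, ω')‖ ≤ ‖v‖ ^ 2 * (K * ‖ω - ω'‖) := by gcongr
  have h6 : 0 ≤ ‖v‖ * ρ * K * ‖ω - ω'‖ := by positivity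
  have h7 : 0 ≤ ‖v‖ * (‖v‖ + ρ) * ‖ω - ω'‖ := by positivity
  nlinarith [hA, h5, h6, h7]

/-! ### Approximately invariant curves -/

/-- An entire function that is `O(vⁿ)` at `0` is divisible by `vⁿ`. -/
lemma factor_of_isBigO (n : ℕ) : ∀ {f : ℂ → ℂ}, Differentiable ℂ f →
    f =O[𝓝[≠] 0] (fun v => v ^ n) → ∃ g : ℂ → ℂ, Differentiable ℂ g ∧ ∀ v, f v = v ^ n * g v := by
  induction n with
  | zero => intro f hf _; exact ⟨f, hf, by simp⟩
  | succ n ih =>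
    intro f hf hO
    have h0 : f 0 = 0 := by
      have h1 : Tendsto (fun v : ℂ => v ^ (n + 1)) (𝓝[≠] 0) (𝓝 0) := by
        have : ContinuousAt (fun v : ℂ => v ^ (n + 1)) 0 := by fun_prop
        have h2 := this.tendsto
        simp only [ne_eq, Nat.add_eq_zero_iff, one_ne_zero, and_false, not_false_eq_true,
          zero_pow] at h2
        exact h2.mono_left nhdsWithin_le_nhds
      exact tendsto_nhds_unique ((hf.continuous.tendsto 0).mono_left nhdsWithin_le_nhds)
        (hO.trans_tendsto h1)
    have hd : Differentiable ℂ (dslope f 0) := by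
      rw [← differentiableOn_univ, Complex.differentiableOn_dslope univ_mem]
      exact hf.differentiableOn
    have heq : ∀ v, f v = v * dslope f 0 v := by
      intro v
      have := sub_smul_dslope f 0 v
      simpa [h0] using this.symm
    obtain ⟨g, hg, hgf⟩ := ih hd (by
      obtain ⟨C, hC⟩ := hO.bound
      refine IsBigO.of_bound C ?_
      filter_upwards [hC, self_mem_nhdsWithin] with v hv hv0
      have hv1 : 0 < ‖v‖ := norm_pos_iff.2 hv0
      rw [heq, pow_succ, norm_mul, norm_mul] at hv
      nlinarith)
    exact ⟨g, hg, fun v => by rw [heq, hgf, pow_succ]; ring⟩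

/-- An entire function that is `O(vⁿ)` at `0` has a leading coefficient: subtracting `ε·vⁿ` gains one
order. -/
lemma leading_coeff (n : ℕ) {f : ℂ → ℂ} (hf : Differentiable ℂ f)
    (hO : f =O[𝓝 0] (fun v => v ^ n)) :
    ∃ ε : ℂ, (fun v => f v - ε * v ^ n) =O[𝓝 0] (fun v => v ^ (n + 1)) := by
  obtain ⟨g, hg, hgf⟩ := factor_of_isBigO n hf (hO.mono nhdsWithin_le_nhds)
  refine ⟨g 0, ?_⟩
  have h1 : (fun v => g v - g 0) =O[𝓝 0] (fun v : ℂ => v) :=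
    isBigO_of_differentiable (f := fun v => g v - g 0) (by fun_prop) (by simp)
  refine ((isBigO_refl (fun v : ℂ => v ^ n) (𝓝 0)).mul h1).congr ?_ ?_
  · intro v; rw [hgf]; ring
  · intro v; ring

/-- The failure of the curve `ω = v² h(v)` to be invariant under `G`, in the normalization of `Bf`. -/
noncomputable def defect (γ : ℂ) (h : ℂ → ℂ) (v : ℂ) : ℂ := Bf γ h (v, v ^ 2 * h v)

lemma differentiable_defect (γ : ℂ) {h : ℂ → ℂ} (hh : Differentiable ℂ h) :
    Differentiable ℂ (defect γ h) := by
  unfold defect Bf Gm Ef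
  fun_prop

lemma defect_zero (γ : ℂ) : (defect γ 0) =O[𝓝 0] (fun v => v ^ 3) := by
  set E : ℂ → ℂ := fun v => Complex.exp (-v)
  set k : ℂ → ℂ := fun v => γ * E v - (1 + γ) * Complex.exp (-(v * E v))
  have h1 : (fun v => Complex.exp (-v) - 1 - (-v)) =O[𝓝 0] (fun v : ℂ => v ^ 2) := by
    have : Tendsto (fun v : ℂ => -v) (𝓝 0) (𝓝 0) := by simpa using (continuous_neg (G := ℂ)).tendsto 0
    refine (exp_sub_isBigO.comp_tendsto this).congr_right ?_
    intro v; simp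
  have hk : Differentiable ℂ (fun v => Complex.exp (v * k v)) := by simp only [k, E]; fun_prop
  have h2 : (fun v => Complex.exp (v * k v)) =O[𝓝 0] (fun _ => (1 : ℂ)) :=
    (hk.continuous.tendsto 0).isBigO_one ℂ
  have h3 : (fun v => Complex.exp ((γ - 2) * (v * E v)) - Complex.exp (v * k v))
      =O[𝓝 0] (fun v : ℂ => v) := by
    refine isBigO_of_differentiable (f := fun v => Complex.exp ((γ - 2) * (v * E v)) -
      Complex.exp (v * k v)) ?_ ?_
    · have : Differentiable ℂ (fun v => Complex.exp ((γ - 2) * (v * E v))) := by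
        simp only [E]; fun_prop
      exact (this.sub hk) 0
    · simp
  have hv := isBigO_refl (fun v : ℂ => v) (𝓝 0)
  have h4 : (fun v => v * ((Complex.exp (-v) - 1 - (-v)) * Complex.exp (v * k v)))
      =O[𝓝 0] (fun v : ℂ => v ^ 3) :=
    (hv.mul (h1.mul h2)).congr_right (fun v => by ring)
  have h5 : (fun v => v * (v * (Complex.exp ((γ - 2) * (v * E v)) - Complex.exp (v * k v))))
      =O[𝓝 0] (fun v : ℂ => v ^ 3) :=
    (hv.mul (hv.mul h3)).congr_right (fun v => by ring)
  refine (h4.add h5).congr_left (fun v => ?_)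
  simp only [defect, Bf_eq, mf, kf, Ef, k, E, Pi.zero_apply, mul_zero, zero_sub, sub_zero, mul_one]
  ring

/-- Effect on `Bf` of adding a monomial to `h`. -/
lemma Bf_add (γ β : ℂ) (h : ℂ → ℂ) (J : ℕ) (q : ℂ × ℂ) :
    Bf γ (fun v => h v + β * v ^ J) q =
      Bf γ h q - β * q.1 ^ (J + 2) * Complex.exp ((γ - (J + 2 : ℕ)) * (q.1 * Ef q)) := by
  have h2 : Complex.exp ((γ - (J + 2 : ℕ)) * (q.1 * Ef q)) = Complex.exp (γ * (q.1 * Ef q)) *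
      Complex.exp (-(q.1 * Ef q)) ^ (J + 2) := by
    rw [← Complex.exp_nat_mul, ← Complex.exp_add]; congr 1; push_cast; ring
  rw [h2]
  simp only [Bf, Gm]
  ring

/-- Adding `β·v^J` to `h` changes the coefficient of `v^{J+3}` in the defect by `-(γ - (J+2))β`, so that
the coefficient can be removed unless `γ = J + 2`. -/
lemma defect_step (γ : ℂ) {h : ℂ → ℂ} (hh : Differentiable ℂ h) (J : ℕ)
    (hγ : γ ≠ (J + 2 : ℕ)) (hO : (defect γ h) =O[𝓝 0] (fun v => v ^ (J + 3))) :
    ∃ h' : ℂ → ℂ, Differentiable ℂ h' ∧ (defect γ h') =O[𝓝 0] (fun v => v ^ (J + 4)) := by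
  obtain ⟨ε, hε⟩ := leading_coeff _ (differentiable_defect γ hh) hO
  set β := ε / (γ - (J + 2 : ℕ)) with hβ
  have hβε : β * (γ - (J + 2 : ℕ)) = ε := div_mul_cancel₀ _ (sub_ne_zero.2 hγ)
  set h' : ℂ → ℂ := fun v => h v + β * v ^ J with hh'
  have hd' : Differentiable ℂ h' := by simp only [hh']; fun_prop
  refine ⟨h', hd', ?_⟩
  obtain ⟨C, r, hC, hr, hdiff⟩ := Bf_diff γ hh
  -- moving from the old curve to the new one changes `Bf` by the displacement, up to order `J + 4`
  have hp : (fun v => v ^ 2 * h v) =O[𝓝 0] (fun v : ℂ => v) :=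
    isBigO_of_differentiable (f := fun v => v ^ 2 * h v) (by fun_prop) (by simp)
  have hp' : (fun v => v ^ 2 * h' v) =O[𝓝 0] (fun v : ℂ => v) :=
    isBigO_of_differentiable (f := fun v => v ^ 2 * h' v) (by fun_prop) (by simp)
  have h1 : (fun v => Bf γ h (v, v ^ 2 * h' v) - Bf γ h (v, v ^ 2 * h v) -
      (v ^ 2 * h' v - v ^ 2 * h v)) =O[𝓝 0] (fun v => v ^ (J + 4)) := by
    obtain ⟨K, hKpos, hK⟩ := hp.exists_pos
    obtain ⟨K', hKpos', hK'⟩ := hp'.exists_pos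
    refine IsBigO.of_bound (C * (1 + max K K') * ‖β‖) ?_
    have hr' : 0 < min r (r / (max K K')) := by positivity
    filter_upwards [hK.bound, hK'.bound, Metric.ball_mem_nhds (0 : ℂ) hr'] with v e1 e2 e3
    rw [mem_ball_zero_iff, lt_min_iff, lt_div_iff₀ (by positivity)] at e3
    have := hdiff v (v ^ 2 * h' v) (v ^ 2 * h v) (max K K' * ‖v‖) e3.1 (by linarith [e3.2])
      (e2.trans (by gcongr; exact le_max_right _ _)) (e1.trans (by gcongr; exact le_max_left _ _))
    refine this.trans (le_of_eq ?_)
    have h5 : v ^ 2 * h' v - v ^ 2 * h v = β * v ^ (J + 2) := by simp only [hh']; ring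
    rw [h5, norm_mul, norm_pow, norm_pow]
    ring
  have h2 : (fun v => β * v ^ (J + 2) * (Complex.exp ((γ - (J + 2 : ℕ)) *
      (v * Ef (v, v ^ 2 * h' v))) - 1 - (γ - (J + 2 : ℕ)) * v)) =O[𝓝 0] (fun v => v ^ (J + 4)) := by
    have hf : Differentiable ℂ (fun v => (γ - (J + 2 : ℕ)) * Ef (v, v ^ 2 * h' v)) := by
      unfold Ef; fun_prop
    have hfb : (fun v => (γ - (J + 2 : ℕ)) * Ef (v, v ^ 2 * h' v)) =O[𝓝 0] (fun _ => (1 : ℂ)) :=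
      (hf.continuous.tendsto 0).isBigO_one ℂ
    have hv := isBigO_refl (fun v : ℂ => v) (𝓝 0)
    have a1 : Tendsto (fun v => v * ((γ - (J + 2 : ℕ)) * Ef (v, v ^ 2 * h' v))) (𝓝 0) (𝓝 0) := by
      have : Continuous (fun v => v * ((γ - (J + 2 : ℕ)) * Ef (v, v ^ 2 * h' v))) :=
        continuous_id.mul hf.continuous
      simpa using this.tendsto 0
    have a2 := (exp_sub_isBigO.comp_tendsto a1).trans (((hv.mul hfb).pow 2).congr_right
      (fun v => by rw [mul_one]))
    have a3 : (fun v => (γ - (J + 2 : ℕ)) * Ef (v, v ^ 2 * h' v) - (γ - (J + 2 : ℕ)))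
        =O[𝓝 0] (fun v : ℂ => v) := by
      refine isBigO_of_differentiable (f := fun v => (γ - (J + 2 : ℕ)) * Ef (v, v ^ 2 * h' v) -
        (γ - (J + 2 : ℕ))) ?_ ?_
      · exact (hf.sub_const _) 0
      · simp [Ef]
    have a4 := a2.add ((hv.mul a3).congr_right (fun v => (sq v).symm))
    have a5 := ((isBigO_refl (fun v : ℂ => v ^ (J + 2)) (𝓝 0)).const_mul_left β).mul a4
    refine a5.congr ?_ ?_
    · intro v; simp only [Function.comp]
      rw [show (γ - (J + 2 : ℕ)) * (v * Ef (v, v ^ 2 * h' v)) =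
        v * ((γ - (J + 2 : ℕ)) * Ef (v, v ^ 2 * h' v)) by ring]
      ring
    · intro v; ring
  refine ((h1.sub h2).add hε).congr_left (fun v => ?_)
  have h6 := Bf_add γ β h J (v, v ^ 2 * h' v)
  simp only at h6
  simp only [defect]
  rw [← hh'] at h6
  rw [h6, ← hβε]
  simp only [hh']
  ring

/-- The defect can be made of order `J + 3` as long as no resonance `γ = j + 2` with `j < J` occurs. -/
lemma exists_defect (γ : ℂ) (J : ℕ) (hγ : ∀ j < J, γ ≠ (j + 2 : ℕ)) :
    ∃ h : ℂ → ℂ, Differentiable ℂ h ∧ (defect γ h) =O[𝓝 0] (fun v => v ^ (J + 3)) := by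
  induction J with
  | zero => exact ⟨0, differentiable_const _, defect_zero γ⟩
  | succ J ih =>
    obtain ⟨h, hh, hO⟩ := ih (fun j hj => hγ j (by omega))
    exact defect_step γ hh J (hγ J (by omega)) hO

/-! ### The normal form estimate -/

/-- Throughout, `x^γ` is written `exp(γ log x)`. -/
lemma norm_exp_log (γ : ℝ) {x : ℂ} (hx : x ≠ 0) :
    ‖Complex.exp (γ * Complex.log x)‖ = ‖x‖ ^ γ := by
  rw [Complex.norm_exp, Complex.re_ofReal_mul, Complex.log_re, Real.rpow_def_of_pos
    (norm_pos_iff.2 hx), mul_comm]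

lemma isBigO_inv_bound {f : ℂ → ℂ} {n : ℕ} (hO : f =O[𝓝 0] (fun v => v ^ n)) :
    ∃ C R : ℝ, 0 ≤ C ∧ 1 ≤ R ∧ ∀ x : ℂ, R < ‖x‖ → ‖f x⁻¹‖ ≤ C * ‖x‖ ^ (-(n : ℝ)) := by
  obtain ⟨C, hC, h⟩ := hO.exists_pos
  obtain ⟨r, hr, hb⟩ := Metric.mem_nhds_iff.1 h.bound
  refine ⟨C, max 1 r⁻¹, hC.le, le_max_left _ _, fun x hx => ?_⟩
  have hx1 : 1 < ‖x‖ := (le_max_left _ _).trans_lt hx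
  have hx2 : ‖x⁻¹‖ < r := by
    rw [norm_inv]
    exact inv_lt_of_inv_lt₀ hr ((le_max_right _ _).trans_lt hx)
  have := hb (mem_ball_zero_iff.2 hx2)
  refine (show ‖f x⁻¹‖ ≤ C * ‖x⁻¹ ^ n‖ from this).trans (le_of_eq ?_)
  rw [norm_pow, norm_inv, Real.rpow_neg (by positivity), Real.rpow_natCast, inv_pow]

lemma re_le_norm' {R : ℝ} {x : ℂ} (h : R < x.re) : R < ‖x‖ :=
  h.trans_le ((le_abs_self _).trans (Complex.abs_re_le_norm x))

/-- With `⌈γ⌉ = J + 2`, the defect is made of order `J + 3`. If `γ < J + 2` this suffices with `κ = 0`;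
if `γ = J + 2` the resonant coefficient becomes `κ`. -/
lemma exists_normal_form {γ : ℝ} (hγ : 1 < γ) :
    ∃ (h : ℂ → ℂ) (κ : ℂ) (η C R : ℝ), Differentiable ℂ h ∧ 0 < η ∧ η ≤ 1 / 2 ∧ 1 + 2 * η ≤ γ ∧ 0 ≤ C ∧
      1 ≤ R ∧ ∀ x : ℂ, R < x.re →
        ‖Complex.exp (γ * Complex.log x) * defect γ h x⁻¹ - κ * x⁻¹‖ ≤ C * ‖x‖ ^ (-(1 + η)) := by
  obtain ⟨J, hJ⟩ : ∃ J : ℕ, ⌈γ⌉₊ = J + 2 := by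
    have : 1 < ⌈γ⌉₊ := by rw [Nat.lt_ceil]; exact_mod_cast hγ
    exact ⟨⌈γ⌉₊ - 2, by omega⟩
  have hle : γ ≤ J + 2 := by
    have := Nat.le_ceil γ
    rw [hJ] at this
    exact_mod_cast this
  obtain ⟨h, hh, hO⟩ := exists_defect (γ : ℂ) J (by
    intro j hj heq
    have h1 : γ = (j + 2 : ℕ) := by exact_mod_cast heq
    rw [h1, Nat.ceil_natCast] at hJ
    omega)
  rcases hle.eq_or_lt with heq | hlt
  · obtain ⟨ε, hε⟩ := leading_coeff _ (differentiable_defect γ hh) hO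
    obtain ⟨C, R, hC, hR, hb⟩ := isBigO_inv_bound hε
    refine ⟨h, ε, min (1 / 2) ((γ - 1) / 2), C, R, hh, lt_min (by norm_num) (by linarith),
      min_le_left _ _, by linarith [min_le_right (1 / 2 : ℝ) ((γ - 1) / 2)], hC, hR, ?_⟩
    intro x hx
    have hx1 : 1 < ‖x‖ := hR.trans_lt (re_le_norm' hx)
    have hx0 : x ≠ 0 := by rintro rfl; simp at hx1; linarith
    have h1 := hb x (re_le_norm' hx)
    have hexp : Complex.exp (γ * Complex.log x) = x ^ (J + 2) := by
      rw [heq, show ((J + 2 : ℝ) : ℂ) = ((J + 2 : ℕ) : ℂ) by push_cast; ring, Complex.exp_nat_mul,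
        Complex.exp_log hx0]
    have h2 : Complex.exp (γ * Complex.log x) * defect γ h x⁻¹ - ε * x⁻¹ =
        Complex.exp (γ * Complex.log x) * (defect γ h x⁻¹ - ε * x⁻¹ ^ (J + 3)) := by
      rw [hexp, mul_sub]; congr 1; rw [inv_pow]; field_simp; ring
    rw [h2, norm_mul, norm_exp_log _ hx0]
    calc ‖x‖ ^ γ * ‖defect γ h x⁻¹ - ε * x⁻¹ ^ (J + 3)‖ ≤
          ‖x‖ ^ γ * (C * ‖x‖ ^ (-((J + 3 + 1 : ℕ) : ℝ))) := by gcongr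
      _ = C * ‖x‖ ^ (-2 : ℝ) := by
          rw [mul_left_comm, ← Real.rpow_add (by linarith), heq]; push_cast; ring_nf
      _ ≤ _ := by
          gcongr
          · exact hx1.le
          · linarith [min_le_left (1 / 2 : ℝ) ((γ - 1) / 2)]
  · obtain ⟨C, R, hC, hR, hb⟩ := isBigO_inv_bound hO
    refine ⟨h, 0, min (min (1 / 2) ((γ - 1) / 2)) (J + 2 - γ), C, R, hh,
      lt_min (lt_min (by norm_num) (by linarith)) (by linarith),
      (min_le_left _ _).trans (min_le_left _ _), ?_, hC, hR, ?_⟩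
    · have := (min_le_left (min (1 / 2) ((γ - 1) / 2)) (J + 2 - γ)).trans (min_le_right _ _)
      linarith
    intro x hx
    have hx1 : 1 < ‖x‖ := hR.trans_lt (re_le_norm' hx)
    have hx0 : x ≠ 0 := by rintro rfl; simp at hx1; linarith
    have h1 := hb x (re_le_norm' hx)
    rw [zero_mul, sub_zero, norm_mul, norm_exp_log _ hx0]
    calc ‖x‖ ^ γ * ‖defect γ h x⁻¹‖ ≤ ‖x‖ ^ γ * (C * ‖x‖ ^ (-((J + 3 : ℕ) : ℝ))) := by gcongr
      _ = C * ‖x‖ ^ (-(1 + (J + 2 - γ))) := by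
          rw [mul_left_comm, ← Real.rpow_add (by linarith)]; push_cast; ring_nf
      _ ≤ _ := by
          gcongr
          · exact hx1.le
          · exact min_le_right _ _

/-! ### One step of the planar map in Fatou coordinates -/

lemma exp_cubic_bound {u : ℂ} (hu : ‖u‖ ≤ 1) : ‖Complex.exp u - 1 - u - u ^ 2 / 2‖ ≤ ‖u‖ ^ 3 := by
  have := Complex.exp_bound hu (n := 3) (by norm_num)
  simp only [Finset.sum_range_succ, Finset.sum_range_zero] at this
  norm_num [Nat.factorial] at this
  rw [show Complex.exp u - 1 - u - u ^ 2 / 2 = Complex.exp u - (1 + u + u ^ 2 / 2) by ring]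
  refine this.trans ?_
  nlinarith [pow_nonneg (norm_nonneg u) 3]

lemma Ef_sub_one {v ω : ℂ} (hv : ‖v‖ ≤ 1 / 4) (hω : ‖ω‖ ≤ 1 / 4) :
    ‖Ef (v, ω) - 1‖ ≤ 2 * (‖v‖ + ‖ω‖) ∧ ‖Ef (v, ω)‖ ≤ 2 ∧
      ‖Ef (v, ω) - 1 - (ω - v)‖ ≤ 2 * (‖v‖ ^ 2 + ‖ω‖) := by
  have h1 : ‖ω - v‖ ≤ ‖v‖ + ‖ω‖ := by linarith [norm_sub_le ω v]
  have h2 : ‖ω - v‖ ≤ 1 := by linarith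
  have h3 : ‖Ef (v, ω) - 1‖ ≤ 2 * ‖ω - v‖ := Complex.norm_exp_sub_one_le h2
  have h4 : ‖Ef (v, ω) - 1 - (ω - v)‖ ≤ ‖ω - v‖ ^ 2 := Complex.norm_exp_sub_one_sub_id_le h2
  refine ⟨by linarith, ?_, ?_⟩
  · have := norm_add_le (Ef (v, ω) - 1) 1
    rw [sub_add_cancel, norm_one] at this
    linarith
  · nlinarith [norm_nonneg v, norm_nonneg ω, norm_nonneg (ω - v), sq_nonneg (‖v‖ - ‖ω‖)]

/-- One step of `x = 1/v`: it moves by `1 + O(|v| + |ω|)`, and adding half the increment `v·E` of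
`log x` improves the error to `O(|v|² + |ω|)`. -/
lemma step_x {x ω : ℂ} (hx : x ≠ 0) (hv : ‖x⁻¹‖ ≤ 1 / 4) (hω : ‖ω‖ ≤ 1 / 4) :
    ‖x * Complex.exp (x⁻¹ * Ef (x⁻¹, ω)) - x - 1‖ ≤ 6 * (‖x⁻¹‖ + ‖ω‖) ∧
    ‖x * Complex.exp (x⁻¹ * Ef (x⁻¹, ω)) - x - 1 + x⁻¹ * Ef (x⁻¹, ω) / 2‖ ≤
      14 * (‖x⁻¹‖ ^ 2 + ‖ω‖) ∧ ‖x⁻¹ * Ef (x⁻¹, ω)‖ ≤ 1 / 2 := by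
  obtain ⟨e1, e2, e3⟩ := Ef_sub_one hv hω
  have hxv : ‖x‖ * ‖x⁻¹‖ = 1 := by rw [← norm_mul, mul_inv_cancel₀ hx, norm_one]
  have hxv' : x * x⁻¹ = 1 := mul_inv_cancel₀ hx
  set v := x⁻¹
  set E := Ef (v, ω)
  have hv0 := norm_nonneg v
  have hω0 := norm_nonneg ω
  have hu : ‖v * E‖ ≤ 2 * ‖v‖ := by rw [norm_mul]; nlinarith
  have hu1 : ‖v * E‖ ≤ 1 := by linarith
  have hux : ‖x‖ * ‖v * E‖ ≤ 2 := by
    calc ‖x‖ * ‖v * E‖ ≤ ‖x‖ * (2 * ‖v‖) := by gcongr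
      _ = 2 := by rw [mul_left_comm, hxv, mul_one]
  refine ⟨?_, ?_, by linarith⟩
  · have h1 : x * Complex.exp (v * E) - x - 1 = x * (Complex.exp (v * E) - 1 - v * E) + (E - 1) := by
      linear_combination E * hxv'
    rw [h1]
    refine (norm_add_le _ _).trans ?_
    rw [norm_mul]
    have h2 : ‖x‖ * ‖Complex.exp (v * E) - 1 - v * E‖ ≤ ‖x‖ * ‖v * E‖ ^ 2 := by
      gcongr; exact Complex.norm_exp_sub_one_sub_id_le hu1
    have h3 : ‖x‖ * ‖v * E‖ ^ 2 ≤ 4 * ‖v‖ := by nlinarith [norm_nonneg (v * E)]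
    linarith
  · have h1 : x * Complex.exp (v * E) - x - 1 + v * E / 2 =
        x * (Complex.exp (v * E) - 1 - v * E - (v * E) ^ 2 / 2) + (E - 1 - (ω - v)) + ω +
        v / 2 * ((E - 1) * (E + 2)) := by
      linear_combination (E + v * E ^ 2 / 2) * hxv'
    rw [h1]
    have h2 : ‖x * (Complex.exp (v * E) - 1 - v * E - (v * E) ^ 2 / 2)‖ ≤ 8 * ‖v‖ ^ 2 := by
      rw [norm_mul]
      calc _ ≤ ‖x‖ * ‖v * E‖ ^ 3 := by gcongr; exact exp_cubic_bound hu1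
        _ = (‖x‖ * ‖v * E‖) * ‖v * E‖ ^ 2 := by ring
        _ ≤ 2 * (2 * ‖v‖) ^ 2 := by gcongr
        _ = _ := by ring
    have h3 : ‖v / 2 * ((E - 1) * (E + 2))‖ ≤ ‖v‖ / 2 * ((2 * (‖v‖ + ‖ω‖)) * 4) := by
      rw [norm_mul, norm_mul, norm_div, Complex.norm_ofNat]
      gcongr
      refine (norm_add_le _ _).trans ?_
      rw [Complex.norm_ofNat]; linarith
    have h4 := norm_add_le (x * (Complex.exp (v * E) - 1 - v * E - (v * E) ^ 2 / 2) +
      (E - 1 - (ω - v)) + ω) (v / 2 * ((E - 1) * (E + 2)))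
    have h5 := norm_add_le (x * (Complex.exp (v * E) - 1 - v * E - (v * E) ^ 2 / 2) +
      (E - 1 - (ω - v))) ω
    have h6 := norm_add_le (x * (Complex.exp (v * E) - 1 - v * E - (v * E) ^ 2 / 2))
      (E - 1 - (ω - v))
    nlinarith [mul_nonneg hv0 hω0]

/-- No branch jump of the logarithm occurs in one step. -/
lemma step_log {x u : ℂ} (hx : 0 < x.re) (hu : ‖u‖ ≤ 1 / 2) :
    Complex.log (x * Complex.exp u) = Complex.log x + u := by
  have hx0 : x ≠ 0 := by rintro rfl; simp at hx
  have h1 : x * Complex.exp u = Complex.exp (Complex.log x + u) := by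
    rw [Complex.exp_add, Complex.exp_log hx0]
  have h2 := Complex.abs_arg_lt_pi_div_two_iff.2 (Or.inl hx)
  have h3 := (Complex.abs_im_le_norm u).trans hu
  rw [abs_lt] at h2
  rw [abs_le] at h3
  have hpi := Real.pi_gt_three
  rw [h1, Complex.log_exp] <;> rw [Complex.add_im, Complex.log_im] <;> linarith [h2.1, h2.2, h3.1, h3.2]

lemma Gm_fst_inv (γ : ℂ) (x ω : ℂ) :
    (Gm γ (x⁻¹, ω)).1⁻¹ = x * Complex.exp (x⁻¹ * Ef (x⁻¹, ω)) := by
  simp only [Gm, mul_inv, inv_inv, Complex.exp_neg]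

lemma log_bound {η : ℝ} (hη : 0 < η) :
    ∃ C : ℝ, 0 ≤ C ∧ ∀ x : ℂ, 1 ≤ ‖x‖ → ‖Complex.log x‖ ≤ C * ‖x‖ ^ η := by
  refine ⟨1 / η + Real.pi, by positivity, fun x hx => ?_⟩
  have h1 := Complex.norm_le_abs_re_add_abs_im (Complex.log x)
  rw [Complex.log_re, Complex.log_im, abs_of_nonneg (Real.log_nonneg hx)] at h1
  have h2 := Complex.abs_arg_le_pi x
  have h3 := Real.log_le_rpow_div (norm_nonneg x) hη
  have h4 := Real.one_le_rpow hx hη.le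
  have : (1 / η + Real.pi) * ‖x‖ ^ η = ‖x‖ ^ η / η + Real.pi * ‖x‖ ^ η := by ring
  nlinarith [Real.pi_pos]

/-- The coordinate change `(v, ω) ↦ (x, Y)`, with `x = 1/v` and `Y = x^γ(ω - v² h(v)) - κ log x`. -/
noncomputable def Th (γ : ℝ) (h : ℂ → ℂ) (κ : ℂ) (q : ℂ × ℂ) : ℂ × ℂ :=
  (q.1⁻¹, Complex.exp (γ * Complex.log q.1⁻¹) * (q.2 - q.1 ^ 2 * h q.1) - κ * Complex.log q.1⁻¹)

/-- The inverse of `Th`: `(x, Y) ↦ (1/x, x^{-2} h(1/x) + x^{-γ}(Y + κ log x))`. -/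
noncomputable def La (γ : ℝ) (h : ℂ → ℂ) (κ : ℂ) (d : ℂ × ℂ) : ℂ × ℂ :=
  (d.1⁻¹, d.1⁻¹ ^ 2 * h d.1⁻¹ + Complex.exp ((-γ : ℝ) * Complex.log d.1) *
    (d.2 + κ * Complex.log d.1))

/-- The data `h`, `κ`, `η` for which the curve `ω = v² h(v)` is invariant up to a resonant term
`κ·x^{-1}` and an error `O(|x|^{-(1+η)})`, after multiplication by `x^γ`. -/
structure NormalForm (γ : ℝ) (h : ℂ → ℂ) (κ : ℂ) (η : ℝ) : Prop where
  one_lt : 1 < γ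
  diff : Differentiable ℂ h
  pos : 0 < η
  le_half : η ≤ 1 / 2
  le_γ : 1 + 2 * η ≤ γ
  bound : ∃ C R : ℝ, 0 ≤ C ∧ 1 ≤ R ∧ ∀ x : ℂ, R < x.re →
    ‖Complex.exp (γ * Complex.log x) * defect γ h x⁻¹ - κ * x⁻¹‖ ≤ C * ‖x‖ ^ (-(1 + η))

/-- The increment of `Y`: a contraction term from the variation of `Bf` in `ω`, the defect without its
resonant part, and the error in replacing the increment of `log x` by `1/x`. -/
lemma Th_Gm_snd {γ : ℝ} {h : ℂ → ℂ} {κ : ℂ} {x ω : ℂ} (hx : 0 < x.re)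
    (hu : ‖x⁻¹ * Ef (x⁻¹, ω)‖ ≤ 1 / 2) :
    (Th γ h κ (Gm γ (x⁻¹, ω))).2 - (Th γ h κ (x⁻¹, ω)).2 =
      Complex.exp (γ * Complex.log x) * (Bf γ h (x⁻¹, ω) - Bf γ h (x⁻¹, x⁻¹ ^ 2 * h x⁻¹) -
        (ω - x⁻¹ ^ 2 * h x⁻¹)) +
      (Complex.exp (γ * Complex.log x) * defect γ h x⁻¹ - κ * x⁻¹) +
      κ * (x⁻¹ * (1 - Ef (x⁻¹, ω))) := by
  have h1 : (Th γ h κ (Gm γ (x⁻¹, ω))).2 = Complex.exp (γ * Complex.log x) * Bf γ h (x⁻¹, ω) -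
      κ * (Complex.log x + x⁻¹ * Ef (x⁻¹, ω)) := by
    simp only [Th]
    rw [Gm_fst_inv, step_log hx hu, mul_add, Complex.exp_add]
    simp only [Bf]
    ring
  rw [h1]
  simp only [Th, defect, inv_inv]
  ring

lemma bounded_near {h : ℂ → ℂ} (hh : Differentiable ℂ h) :
    ∃ H R : ℝ, 0 ≤ H ∧ 1 ≤ R ∧ ∀ x : ℂ, R < ‖x‖ → ‖h x⁻¹‖ ≤ H := by
  obtain ⟨C, R, hC, hR, hb⟩ := isBigO_inv_bound (f := h) (n := 0)
    (by simpa using (hh.continuous.tendsto 0).isBigO_one ℂ)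
  exact ⟨C, R, hC, hR, fun x hx => by simpa using hb x hx⟩

/-- One step changes `Y` by `O(|x|^{-(1+η)})(1 + |Y|)` in any region `|ω| ≤ K|v|`. -/
lemma step_Y {γ : ℝ} {h : ℂ → ℂ} {κ : ℂ} {η : ℝ} (N : NormalForm γ h κ η) (K : ℝ) (hK : 0 ≤ K) :
    ∃ C R : ℝ, 0 ≤ C ∧ 1 ≤ R ∧ ∀ x ω : ℂ, R < x.re → ‖ω‖ ≤ K * ‖x⁻¹‖ →
      ‖(Th γ h κ (Gm γ (x⁻¹, ω))).2 - (Th γ h κ (x⁻¹, ω)).2‖ ≤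
        C * ‖x‖ ^ (-(1 + η)) * (1 + ‖(Th γ h κ (x⁻¹, ω)).2‖) := by
  obtain ⟨C₁, r, hC₁, hr, hdiff⟩ := Bf_diff γ N.diff
  obtain ⟨C₂, R₂, hC₂, hR₂, hb₂⟩ := N.bound
  obtain ⟨H, R₃, hH, hR₃, hb₃⟩ := bounded_near N.diff
  obtain ⟨C₄, hC₄, hlog⟩ := log_bound N.pos
  set R := max (max (max R₂ R₃) (max 4 H)) (max (4 * K) ((K + 2) / r)) with hRdef
  have a1 : R₂ ≤ R := (le_max_left _ _).trans ((le_max_left _ _).trans (le_max_left _ _))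
  have a2 : R₃ ≤ R := (le_max_right _ _).trans ((le_max_left _ _).trans (le_max_left _ _))
  have a3 : 4 ≤ R := (le_max_left _ _).trans ((le_max_right _ _).trans (le_max_left _ _))
  have a4 : H ≤ R := (le_max_right _ _).trans ((le_max_right _ _).trans (le_max_left _ _))
  have a5 : 4 * K ≤ R := (le_max_left _ _).trans (le_max_right _ _)
  have a6 : (K + 2) / r ≤ R := (le_max_right _ _).trans (le_max_right _ _)
  clear_value R
  refine ⟨C₁ * (K + 2) * (1 + ‖κ‖ * C₄) + C₂ + ‖κ‖ * (2 * (1 + K)), R, by positivity, by linarith,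
    ?_⟩
  intro x ω hx hω
  have hxn : R < ‖x‖ := re_le_norm' hx
  have hx1 : 1 ≤ ‖x‖ := by linarith
  have hxp : 0 < ‖x‖ := by linarith
  have hx0 : x ≠ 0 := norm_pos_iff.1 hxp
  have hvx : ‖x⁻¹‖ * ‖x‖ = 1 := by rw [← norm_mul, inv_mul_cancel₀ hx0, norm_one]
  have hv0 := norm_nonneg x⁻¹
  have hv : ‖x⁻¹‖ ≤ 1 / 4 := by nlinarith
  have hω4 : ‖ω‖ ≤ 1 / 4 := by nlinarith
  obtain ⟨e1, e2, e3⟩ := Ef_sub_one hv hω4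
  obtain ⟨-, -, hu⟩ := step_x hx0 hv hω4
  have hp : ‖x⁻¹ ^ 2 * h x⁻¹‖ ≤ ‖x⁻¹‖ := by
    rw [norm_mul, norm_pow]
    have := hb₃ x (by linarith)
    calc ‖x⁻¹‖ ^ 2 * ‖h x⁻¹‖ ≤ ‖x⁻¹‖ ^ 2 * ‖x‖ := by gcongr; linarith
      _ = ‖x⁻¹‖ := by rw [sq, mul_assoc, hvx, mul_one]
  have hr1 : (K + 2) * ‖x⁻¹‖ < r := by
    have h1 : K + 2 < r * ‖x‖ := by
      rw [div_le_iff₀ hr] at a6; nlinarith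
    calc (K + 2) * ‖x⁻¹‖ < (r * ‖x‖) * ‖x⁻¹‖ := by
          gcongr
          exact norm_pos_iff.2 (inv_ne_zero hx0)
      _ = r := by rw [mul_assoc, mul_comm ‖x‖, hvx, mul_one]
  have hd := hdiff x⁻¹ ω (x⁻¹ ^ 2 * h x⁻¹) ((K + 1) * ‖x⁻¹‖) (by nlinarith) (by nlinarith)
    (by nlinarith) (by nlinarith)
  rw [Th_Gm_snd (by linarith) hu]
  set Y := (Th γ h κ (x⁻¹, ω)).2 with hY
  have hYe : Complex.exp (γ * Complex.log x) * (ω - x⁻¹ ^ 2 * h x⁻¹) = Y + κ * Complex.log x := by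
    rw [hY]; simp only [Th, inv_inv]; ring
  have hsq : ‖x⁻¹‖ ^ 2 = ‖x‖ ^ (-2 : ℝ) := by
    rw [norm_inv, Real.rpow_neg hxp.le, inv_pow]; norm_cast
  have hsq1 : ‖x⁻¹‖ ^ 2 ≤ ‖x‖ ^ (-(1 + η)) := by
    rw [hsq]
    exact Real.rpow_le_rpow_of_exponent_le hx1 (by linarith [N.le_half])
  have hsq2 : ‖x⁻¹‖ ^ 2 * ‖x‖ ^ η ≤ ‖x‖ ^ (-(1 + η)) := by
    rw [hsq, ← Real.rpow_add hxp]
    exact Real.rpow_le_rpow_of_exponent_le hx1 (by linarith [N.le_half])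
  set Q := ‖x‖ ^ (-(1 + η)) with hQ
  have hQ0 : 0 ≤ Q := by positivity
  have b1 : ‖Complex.exp (γ * Complex.log x) * (Bf γ h (x⁻¹, ω) - Bf γ h (x⁻¹, x⁻¹ ^ 2 * h x⁻¹) -
        (ω - x⁻¹ ^ 2 * h x⁻¹))‖ ≤ C₁ * (K + 2) * (1 + ‖κ‖ * C₄) * Q * (1 + ‖Y‖) := by
    rw [norm_mul]
    calc _ ≤ ‖Complex.exp (γ * Complex.log x)‖ * (C₁ * ‖x⁻¹‖ * (‖x⁻¹‖ + (K + 1) * ‖x⁻¹‖) *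
          ‖ω - x⁻¹ ^ 2 * h x⁻¹‖) := by gcongr
      _ = C₁ * (K + 2) * (‖x⁻¹‖ ^ 2 * ‖Complex.exp (γ * Complex.log x) *
          (ω - x⁻¹ ^ 2 * h x⁻¹)‖) := by rw [norm_mul]; ring
      _ ≤ C₁ * (K + 2) * ((1 + ‖κ‖ * C₄) * Q * (1 + ‖Y‖)) := by
        refine mul_le_mul_of_nonneg_left ?_ (by positivity)
        rw [hYe]
        calc ‖x⁻¹‖ ^ 2 * ‖Y + κ * Complex.log x‖ ≤
              ‖x⁻¹‖ ^ 2 * (‖Y‖ + ‖κ‖ * (C₄ * ‖x‖ ^ η)) := by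
              gcongr
              refine (norm_add_le _ _).trans ?_
              rw [norm_mul]
              gcongr
              exact hlog x hx1
          _ = ‖x⁻¹‖ ^ 2 * ‖Y‖ + ‖κ‖ * C₄ * (‖x⁻¹‖ ^ 2 * ‖x‖ ^ η) := by ring
          _ ≤ Q * ‖Y‖ + ‖κ‖ * C₄ * Q := by gcongr
          _ ≤ (1 + ‖κ‖ * C₄) * Q * (1 + ‖Y‖) := by
              have : 0 ≤ ‖κ‖ * C₄ * Q * ‖Y‖ := by positivity
              nlinarith
      _ = _ := by ring
  have b2 := hb₂ x (by linarith)
  have b3 : ‖κ * (x⁻¹ * (1 - Ef (x⁻¹, ω)))‖ ≤ ‖κ‖ * (2 * (1 + K)) * Q := by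
    rw [norm_mul, norm_mul, norm_sub_rev]
    calc _ ≤ ‖κ‖ * (‖x⁻¹‖ * (2 * (‖x⁻¹‖ + K * ‖x⁻¹‖))) := by
          gcongr
          linarith
      _ = ‖κ‖ * (2 * (1 + K)) * ‖x⁻¹‖ ^ 2 := by ring
      _ ≤ _ := by gcongr
  refine (norm_add₃_le).trans ?_
  have c1 : 0 ≤ C₂ * Q * ‖Y‖ := by positivity
  have c2 : 0 ≤ ‖κ‖ * (2 * (1 + K)) * Q * ‖Y‖ := by positivity
  have : (C₁ * (K + 2) * (1 + ‖κ‖ * C₄) + C₂ + ‖κ‖ * (2 * (1 + K))) * Q * (1 + ‖Y‖) =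
    C₁ * (K + 2) * (1 + ‖κ‖ * C₄) * Q * (1 + ‖Y‖) + (C₂ * Q + C₂ * Q * ‖Y‖) +
    (‖κ‖ * (2 * (1 + K)) * Q + ‖κ‖ * (2 * (1 + K)) * Q * ‖Y‖) := by ring
  rw [this]
  linarith

/-! ### The planar map satisfies the tail hypothesis -/

lemma Th_La {γ : ℝ} {h : ℂ → ℂ} {κ : ℂ} (d : ℂ × ℂ) : Th γ h κ (La γ h κ d) = d := by
  have h1 : Complex.exp (γ * Complex.log d.1) * Complex.exp ((-γ : ℝ) * Complex.log d.1) = 1 := by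
    rw [← Complex.exp_add]; push_cast; simp
  ext
  · simp [Th, La]
  · simp only [Th, La, inv_inv, add_sub_cancel_left]
    rw [← mul_assoc, h1]; ring

lemma La_Th {γ : ℝ} {h : ℂ → ℂ} {κ : ℂ} (q : ℂ × ℂ) : La γ h κ (Th γ h κ q) = q := by
  have h1 : Complex.exp ((-γ : ℝ) * Complex.log q.1⁻¹) * Complex.exp (γ * Complex.log q.1⁻¹)
      = 1 := by
    rw [← Complex.exp_add]; push_cast; simp
  ext
  · simp [Th, La]
  · simp only [Th, La, inv_inv, sub_add_cancel]
    rw [← mul_assoc, h1]; ring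

lemma differentiable_Gm (γ : ℂ) : Differentiable ℂ (Gm γ) := by
  unfold Gm Ef; fun_prop

lemma differentiableAt_Th {γ : ℝ} {h : ℂ → ℂ} {κ : ℂ} (hh : Differentiable ℂ h) {q : ℂ × ℂ}
    (hq : 0 < (q.1⁻¹).re) : DifferentiableAt ℂ (Th γ h κ) q := by
  have h0 : q.1 ≠ 0 := by rintro h; simp [h] at hq
  have h1 : DifferentiableAt ℂ (fun q : ℂ × ℂ => q.1⁻¹) q := differentiableAt_fst.inv h0
  have h2 : DifferentiableAt ℂ (fun q : ℂ × ℂ => Complex.log q.1⁻¹) q := h1.clog (Or.inl hq)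
  unfold Th
  fun_prop

lemma differentiableAt_La {γ : ℝ} {h : ℂ → ℂ} {κ : ℂ} (hh : Differentiable ℂ h) {d : ℂ × ℂ}
    (hd : 0 < d.1.re) : DifferentiableAt ℂ (La γ h κ) d := by
  have h0 : d.1 ≠ 0 := by rintro h; simp [h] at hd
  have h1 : DifferentiableAt ℂ (fun q : ℂ × ℂ => q.1⁻¹) d := differentiableAt_fst.inv h0
  have h2 : DifferentiableAt ℂ (fun q : ℂ × ℂ => Complex.log q.1) d :=
    differentiableAt_fst.clog (Or.inl hd)
  have h3 : DifferentiableAt ℂ (fun q : ℂ × ℂ => h q.1⁻¹) d := by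
    exact (hh _).comp d h1
  unfold La
  fun_prop

/-- On a domain `Dom R M` the variable `ω` is `O(|x|^{-(1+η)})`; this uses `γ > 1`. -/
lemma La_bound {γ : ℝ} {h : ℂ → ℂ} {κ : ℂ} {η : ℝ} (N : NormalForm γ h κ η) (M : ℝ) :
    ∃ C R : ℝ, 0 ≤ C ∧ 1 ≤ R ∧ ∀ d ∈ Dom R M, ‖(La γ h κ d).2‖ ≤ C * ‖d.1‖ ^ (-(1 + η)) := by
  obtain ⟨H, R₃, hH, hR₃, hb₃⟩ := bounded_near N.diff
  obtain ⟨C₄, hC₄, hlog⟩ := log_bound N.pos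
  refine ⟨H + (|M| + ‖κ‖ * C₄), R₃, by positivity, hR₃, ?_⟩
  rintro ⟨x, y⟩ ⟨hx, hy⟩
  simp only at hx hy ⊢
  have hxn : R₃ < ‖x‖ := re_le_norm' hx
  have hx1 : 1 ≤ ‖x‖ := by linarith
  have hxp : 0 < ‖x‖ := by linarith
  have hx0 : x ≠ 0 := norm_pos_iff.1 hxp
  have hη := N.pos
  have hsq : ‖x⁻¹‖ ^ 2 ≤ ‖x‖ ^ (-(1 + η)) := by
    have : ‖x⁻¹‖ ^ 2 = ‖x‖ ^ (-2 : ℝ) := by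
      rw [norm_inv, Real.rpow_neg hxp.le, inv_pow]; norm_cast
    rw [this]
    exact Real.rpow_le_rpow_of_exponent_le hx1 (by linarith [N.le_half])
  simp only [La]
  refine (norm_add_le _ _).trans ?_
  rw [norm_mul, norm_mul, norm_pow, norm_exp_log _ hx0, add_mul]
  have h1 : ‖h x⁻¹‖ ≤ H := hb₃ x hxn
  have h2 : ‖y + κ * Complex.log x‖ ≤ (|M| + ‖κ‖ * C₄) * ‖x‖ ^ η := by
    have := norm_add_le y (κ * Complex.log x)
    rw [norm_mul] at this
    have h3 := mul_le_mul_of_nonneg_left (hlog x hx1) (norm_nonneg κ)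
    have h4 := Real.one_le_rpow hx1 hη.le
    nlinarith [le_abs_self M, abs_nonneg M]
  have h3 : ‖x‖ ^ (-γ) * ‖x‖ ^ η ≤ ‖x‖ ^ (-(1 + η)) := by
    rw [← Real.rpow_add hxp]
    exact Real.rpow_le_rpow_of_exponent_le hx1 (by linarith [N.le_γ])
  refine add_le_add ?_ ?_
  · rw [mul_comm]; gcongr
  · calc _ ≤ ‖x‖ ^ (-γ) * ((|M| + ‖κ‖ * C₄) * ‖x‖ ^ η) := by gcongr
      _ = (|M| + ‖κ‖ * C₄) * (‖x‖ ^ (-γ) * ‖x‖ ^ η) := by ring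
      _ ≤ _ := by gcongr

/-- The planar map in the coordinates `(x, Y)`. -/
noncomputable def Tm (γ : ℝ) (h : ℂ → ℂ) (κ : ℂ) (d : ℂ × ℂ) : ℂ × ℂ :=
  Th γ h κ (Gm γ (La γ h κ d))

/-- In the coordinates `(x, Y)` the planar map is a summable perturbation of a translation. -/
lemma tailHyp {γ : ℝ} {h : ℂ → ℂ} {κ : ℂ} {η : ℝ} (N : NormalForm γ h κ η) :
    TailHyp (Tm γ h κ) η := by
  intro M
  obtain ⟨C₁, R₁, hC₁, hR₁, hb₁⟩ := La_bound N M
  obtain ⟨C₂, R₂, hC₂, hR₂, hb₂⟩ := step_Y N C₁ hC₁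
  have hη := N.pos
  set R := max (max R₁ R₂) (12 * (1 + C₁)) with hRdef
  have a1 : R₁ ≤ R := (le_max_left _ _).trans (le_max_left _ _)
  have a2 : R₂ ≤ R := (le_max_right _ _).trans (le_max_left _ _)
  have a3 : 12 * (1 + C₁) ≤ R := le_max_right _ _
  clear_value R
  refine ⟨R, 14 * (1 + C₁) + C₂ * (1 + |M|), by linarith, by positivity, ?_⟩
  rintro ⟨x, y⟩ ⟨hx, hy⟩
  simp only at hx hy
  have hω := hb₁ (x, y) ⟨by simp only; linarith, hy⟩
  simp only at hω
  have hxn : R < ‖x‖ := re_le_norm' hx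
  have hx1 : 1 ≤ ‖x‖ := by linarith
  have hxp : 0 < ‖x‖ := by linarith
  have hx0 : x ≠ 0 := norm_pos_iff.1 hxp
  have hvx : ‖x⁻¹‖ * ‖x‖ = 1 := by rw [← norm_mul, inv_mul_cancel₀ hx0, norm_one]
  have hv0 := norm_nonneg x⁻¹
  have hQv : ‖x‖ ^ (-(1 + η)) ≤ ‖x⁻¹‖ := by
    rw [norm_inv, ← Real.rpow_neg_one]
    exact Real.rpow_le_rpow_of_exponent_le hx1 (by linarith)
  have hsq : ‖x⁻¹‖ ^ 2 ≤ ‖x‖ ^ (-(1 + η)) := by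
    have : ‖x⁻¹‖ ^ 2 = ‖x‖ ^ (-2 : ℝ) := by
      rw [norm_inv, Real.rpow_neg hxp.le, inv_pow]; norm_cast
    rw [this]
    exact Real.rpow_le_rpow_of_exponent_le hx1 (by linarith [N.le_half])
  set Q := ‖x‖ ^ (-(1 + η)) with hQ
  have hQ0 : 0 ≤ Q := by positivity
  set ω := (La γ h κ (x, y)).2 with hωd
  have hLa : La γ h κ (x, y) = (x⁻¹, ω) := rfl
  have hωv : ‖ω‖ ≤ C₁ * ‖x⁻¹‖ := hω.trans (by gcongr)
  have hv12 : (1 + C₁) * ‖x⁻¹‖ ≤ 1 / 12 := by nlinarith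
  have hv : ‖x⁻¹‖ ≤ 1 / 4 := by nlinarith
  have hω4 : ‖ω‖ ≤ 1 / 4 := by nlinarith
  obtain ⟨s1, s2, s3⟩ := step_x hx0 hv hω4
  have hT1 : (Tm γ h κ (x, y)).1 = x * Complex.exp (x⁻¹ * Ef (x⁻¹, ω)) := by
    rw [Tm, hLa, ← Gm_fst_inv γ x ω]; rfl
  have hhalf : ‖(Tm γ h κ (x, y)).1 - x - 1‖ ≤ 1 / 2 := by
    rw [hT1]; exact s1.trans (by linarith)
  refine ⟨?_, hhalf, ?_, ?_⟩
  · have hre : 0 < ((Gm γ (La γ h κ (x, y))).1⁻¹).re := by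
      have h1 : (Tm γ h κ (x, y)).1 = (Gm γ (La γ h κ (x, y))).1⁻¹ := rfl
      rw [h1] at hhalf
      have := (Complex.abs_re_le_norm _).trans hhalf
      rw [abs_le] at this
      simp only [Complex.sub_re, Complex.one_re] at this
      linarith [this.1]
    exact (differentiableAt_Th N.diff hre).comp (x, y) ((differentiable_Gm γ _).comp (x, y)
      (differentiableAt_La N.diff (show 0 < x.re by linarith)))
  · have h1 : Xc (Tm γ h κ (x, y)).1 - Xc x - 1 = x * Complex.exp (x⁻¹ * Ef (x⁻¹, ω)) - x - 1 +
        x⁻¹ * Ef (x⁻¹, ω) / 2 := by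
      rw [hT1]; simp only [Xc]
      rw [step_log (by linarith) s3]; ring
    rw [h1]
    refine s2.trans ?_
    have : 0 ≤ C₂ * (1 + |M|) * Q := by positivity
    nlinarith
  · have h1 := hb₂ x ω (by linarith) hωv
    rw [← hLa, Th_La] at h1
    refine (show ‖(Tm γ h κ (x, y)).2 - y‖ ≤ _ from h1).trans ?_
    simp only
    have h2 : C₂ * Q * (1 + ‖y‖) ≤ C₂ * Q * (1 + |M|) := by
      gcongr; exact hy.le.trans (le_abs_self M)
    have h3 : 0 ≤ (1 + C₁) * Q := by positivity
    nlinarith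

/-! ### Orbits in the basin enter the Fatou domains -/

/-- A discrete Gronwall inequality: factors `1 + dₙ` with `∑ dₙ < ∞` keep a sequence bounded. -/
lemma bounded_of_step_le {b d : ℕ → ℝ} (hb : ∀ n, 0 ≤ b n) (hd : ∀ n, 0 ≤ d n) (hs : Summable d)
    {N : ℕ} (h : ∀ n ≥ N, b (n + 1) ≤ b n * (1 + d n)) : ∃ M, 0 ≤ M ∧ ∀ n ≥ N, b n ≤ M := by
  refine ⟨b N * Real.exp (∑' i, d i), mul_nonneg (hb N) (Real.exp_pos _).le, ?_⟩
  have key : ∀ n ≥ N, b n ≤ b N * Real.exp (∑ i ∈ Finset.range n, d i) := by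
    intro n hn
    induction n, hn using Nat.le_induction with
    | base =>
      have : 1 ≤ Real.exp (∑ i ∈ Finset.range N, d i) :=
        Real.one_le_exp (Finset.sum_nonneg fun i _ => hd i)
      nlinarith [hb N]
    | succ n hn ih =>
      rw [Finset.sum_range_succ, Real.exp_add, ← mul_assoc]
      refine (h n hn).trans ?_
      have h1 : 1 + d n ≤ Real.exp (d n) := by linarith [Real.add_one_le_exp (d n)]
      have h2 := hd n
      have h3 : 0 ≤ b N * Real.exp (∑ i ∈ Finset.range n, d i) :=
        mul_nonneg (hb N) (Real.exp_pos _).le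
      exact mul_le_mul ih h1 (by linarith) h3
  intro n hn
  refine (key n hn).trans ?_
  gcongr
  · exact hb N
  · exact hs.sum_le_tsum _ (fun i _ => hd i)

/-- In the sector `Re v ≥ ¾|v|`, the product `|x·ω|` grows by at most `O(|v|²)` in one step: it is
multiplied by about `|1 - (γ - 1)v|`, and `γ > 1`. -/
lemma step_xω {γ : ℝ} (hγ : 1 < γ) : ∃ C r : ℝ, 0 ≤ C ∧ 0 < r ∧ ∀ x ω : ℂ, x ≠ 0 →
    ‖x⁻¹‖ < r → ‖ω‖ < r → 3 / 4 * ‖x⁻¹‖ ≤ (x⁻¹).re →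
    ‖(Gm γ (x⁻¹, ω)).1⁻¹‖ * ‖(Gm γ (x⁻¹, ω)).2‖ ≤ ‖x‖ * ‖ω‖ + C * ‖x⁻¹‖ ^ 2 := by
  obtain ⟨C₁, r₁, hC₁, hr₁, hdiff⟩ := Bf_diff (γ : ℂ) (h := 0) (differentiable_const _)
  obtain ⟨C₂, hC₂, hO⟩ := (defect_zero (γ : ℂ)).exists_pos
  obtain ⟨r₂, hr₂, hb₂⟩ := Metric.mem_nhds_iff.1 hO.bound
  set δ := (γ - 1) / 2 with hδ
  have hδ0 : 0 < δ := by rw [hδ]; linarith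
  refine ⟨C₂, min (min r₁ r₂) (min (1 / 16) (δ / (2 * C₁))), hC₂.le, by positivity, ?_⟩
  intro x ω hx hv hω hre
  simp only [lt_min_iff] at hv hω
  obtain ⟨⟨hv1, hv2⟩, hv3, hv4⟩ := hv
  obtain ⟨⟨hω1, hω2⟩, hω3, hω4⟩ := hω
  obtain ⟨e1, e2, e3⟩ := Ef_sub_one (v := x⁻¹) (ω := ω) (by linarith) (by linarith)
  have hd := hdiff x⁻¹ ω 0 ‖ω‖ hv1 hω1 le_rfl (by simp)
  have hdef : ‖Bf γ 0 (x⁻¹, 0)‖ ≤ C₂ * ‖x⁻¹‖ ^ 3 := by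
    have : ‖defect γ 0 x⁻¹‖ ≤ C₂ * ‖x⁻¹ ^ 3‖ := hb₂ (mem_ball_zero_iff.2 hv2)
    simpa [defect] using this
  have hxv : ‖x‖ * ‖x⁻¹‖ = 1 := by rw [← norm_mul, mul_inv_cancel₀ hx, norm_one]
  have hG2 : (Gm γ (x⁻¹, ω)).2 = Complex.exp (-(γ * (x⁻¹ * Ef (x⁻¹, ω)))) * Bf γ 0 (x⁻¹, ω) := by
    simp only [Bf, Pi.zero_apply, mul_zero, sub_zero]
    rw [← mul_assoc, ← Complex.exp_add]; simp
  have hv0 := norm_nonneg x⁻¹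
  have hω0 := norm_nonneg ω
  rw [Gm_fst_inv, hG2]
  set v := x⁻¹
  set u := v * Ef (v, ω) with hu
  have hure : 1 / 2 * ‖v‖ ≤ u.re := by
    have h1 : u = v + v * (Ef (v, ω) - 1) := by rw [hu]; ring
    have h2 := Complex.abs_re_le_norm (v * (Ef (v, ω) - 1))
    rw [abs_le, norm_mul] at h2
    have h3 : ‖v‖ * ‖Ef (v, ω) - 1‖ ≤ ‖v‖ * (1 / 4) := by gcongr; linarith
    rw [h1, Complex.add_re]
    linarith [h2.1]
  have hexp : ‖x * Complex.exp u‖ * ‖Complex.exp (-(γ * u))‖ ≤ ‖x‖ * Real.exp (-(δ * ‖v‖)) := by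
    rw [norm_mul, mul_assoc, ← norm_mul, ← Complex.exp_add, Complex.norm_exp]
    gcongr
    simp only [Complex.add_re, Complex.neg_re, Complex.re_ofReal_mul]
    rw [hδ]; nlinarith
  have hB : ‖Bf γ 0 (v, ω)‖ ≤ ‖ω‖ * (1 + δ * ‖v‖) + C₂ * ‖v‖ ^ 3 := by
    have h1 : Bf γ 0 (v, ω) = (Bf γ 0 (v, ω) - Bf γ 0 (v, 0) - (ω - 0)) + Bf γ 0 (v, 0) + ω := by
      ring
    rw [sub_zero] at hd h1
    rw [h1]
    refine norm_add₃_le.trans ?_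
    have h2 : C₁ * (‖v‖ + ‖ω‖) ≤ δ := by
      rw [lt_div_iff₀ (by positivity)] at hv4 hω4
      nlinarith
    have h3 : C₁ * ‖v‖ * (‖v‖ + ‖ω‖) * ‖ω‖ ≤ δ * (‖v‖ * ‖ω‖) := by
      calc _ = (C₁ * (‖v‖ + ‖ω‖)) * (‖v‖ * ‖ω‖) := by ring
        _ ≤ _ := by gcongr
    nlinarith
  have hE1 : Real.exp (-(δ * ‖v‖)) * (1 + δ * ‖v‖) ≤ 1 := by
    have h1 := Real.add_one_le_exp (δ * ‖v‖)
    have h2 : Real.exp (-(δ * ‖v‖)) * Real.exp (δ * ‖v‖) = 1 := by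
      rw [← Real.exp_add]; simp
    nlinarith [Real.exp_pos (-(δ * ‖v‖))]
  have hE2 : Real.exp (-(δ * ‖v‖)) ≤ 1 := Real.exp_le_one_iff.2 (by
    have := mul_nonneg hδ0.le hv0; linarith)
  rw [norm_mul (Complex.exp _) (Bf _ _ _), ← mul_assoc]
  calc _ ≤ (‖x‖ * Real.exp (-(δ * ‖v‖))) * (‖ω‖ * (1 + δ * ‖v‖) + C₂ * ‖v‖ ^ 3) := by
        gcongr
    _ = ‖x‖ * ‖ω‖ * (Real.exp (-(δ * ‖v‖)) * (1 + δ * ‖v‖)) +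
        C₂ * ‖v‖ ^ 2 * (‖x‖ * ‖v‖) * Real.exp (-(δ * ‖v‖)) := by ring
    _ ≤ ‖x‖ * ‖ω‖ * 1 + C₂ * ‖v‖ ^ 2 * (‖x‖ * ‖v‖) * 1 := by gcongr
    _ = _ := by rw [hxv]; ring

lemma Gm_fst_ne {γ : ℂ} {q : ℂ × ℂ} : (Gm γ q).1 ≠ 0 ↔ q.1 ≠ 0 := by
  simp [Gm, Complex.exp_ne_zero]

lemma Gm_iter_fst_ne {γ : ℂ} {q : ℂ × ℂ} (n : ℕ) : ((Gm γ)^[n] q).1 ≠ 0 ↔ q.1 ≠ 0 := by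
  induction n with
  | zero => rfl
  | succ n ih => rw [Function.iterate_succ_apply', Gm_fst_ne, ih]

/-- Every orbit with `v ≠ 0` that tends to the origin is eventually in `Dom R M`, where `M` depends on
the orbit only. First `xₙ ∼ n` by Cesàro averaging, then `xₙωₙ` is bounded by `step_xω`, and finally
`Yₙ` is bounded by `step_Y`. -/
lemma enter {γ : ℝ} {h : ℂ → ℂ} {κ : ℂ} {η : ℝ} (N : NormalForm γ h κ η) {q : ℂ × ℂ}
    (hq : q.1 ≠ 0) (hlim : Tendsto (fun n => (Gm γ)^[n] q) atTop (𝓝 0)) :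
    ∃ M : ℝ, ∀ R : ℝ, ∀ᶠ n in atTop, Th γ h κ ((Gm γ)^[n] q) ∈ Dom R M := by
  set x : ℕ → ℂ := fun n => ((Gm γ)^[n] q).1⁻¹ with hxdef
  set w : ℕ → ℂ := fun n => ((Gm γ)^[n] q).2 with hwdef
  have hx0 : ∀ n, x n ≠ 0 := fun n => inv_ne_zero ((Gm_iter_fst_ne n).2 hq)
  have hpt : ∀ n, (Gm γ)^[n] q = ((x n)⁻¹, w n) := fun n => by simp [hxdef, hwdef]
  have hsucc : ∀ n, (Gm γ)^[n + 1] q = Gm γ ((x n)⁻¹, w n) := fun n => by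
    rw [Function.iterate_succ_apply', hpt]
  have hx1 : ∀ n, x (n + 1) = (Gm γ ((x n)⁻¹, w n)).1⁻¹ := fun n => by
    simp only [hxdef]; rw [hsucc]
  have hw1 : ∀ n, w (n + 1) = (Gm γ ((x n)⁻¹, w n)).2 := fun n => by
    simp only [hwdef]; rw [hsucc]
  have hv : Tendsto (fun n => (x n)⁻¹) atTop (𝓝 0) := by
    have := (continuous_fst.tendsto (0 : ℂ × ℂ)).comp hlim
    simpa [hxdef, Function.comp_def] using this
  have hw : Tendsto w atTop (𝓝 0) := (continuous_snd.tendsto (0 : ℂ × ℂ)).comp hlim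
  have hvn : Tendsto (fun n => ‖(x n)⁻¹‖) atTop (𝓝 0) := by simpa using hv.norm
  have hwn : Tendsto (fun n => ‖w n‖) atTop (𝓝 0) := by simpa using hw.norm
  -- `x n` behaves like `n`
  have hd : Tendsto (fun n => x (n + 1) - x n) atTop (𝓝 1) := by
    rw [tendsto_iff_norm_sub_tendsto_zero]
    have h1 : Tendsto (fun n => 6 * (‖(x n)⁻¹‖ + ‖w n‖)) atTop (𝓝 0) := by
      simpa using (hvn.add hwn).const_mul 6
    refine squeeze_zero' (Eventually.of_forall fun n => norm_nonneg _) ?_ h1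
    filter_upwards [hvn.eventually_le_const (show (0 : ℝ) < 1 / 4 by norm_num),
      hwn.eventually_le_const (show (0 : ℝ) < 1 / 4 by norm_num)] with n h2 h3
    have := (step_x (hx0 n) h2 h3).1
    rwa [← Gm_fst_inv γ, ← hx1] at this
  have hces : Tendsto (fun n : ℕ => (n : ℝ)⁻¹ • x n) atTop (𝓝 1) := by
    have h1 := hd.cesaro_smul
    simp only [Finset.sum_range_sub] at h1
    have h2 : Tendsto (fun n : ℕ => (n : ℝ)⁻¹ • x 0) atTop (𝓝 0) := by
      have := ((tendsto_inv_atTop_zero (𝕜 := ℝ)).comp tendsto_natCast_atTop_atTop).smul_const (x 0)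
      simpa [Function.comp_def] using this
    simpa [smul_sub] using h1.add h2
  have hgeo : ∀ᶠ n : ℕ in atTop, 1 ≤ n ∧ (n : ℝ) / 2 ≤ (x n).re ∧
      3 / 4 * ‖(x n)⁻¹‖ ≤ ((x n)⁻¹).re := by
    have h1 := (tendsto_iff_norm_sub_tendsto_zero.1 hces).eventually_le_const
      (show (0 : ℝ) < 1 / 8 by norm_num)
    filter_upwards [h1, eventually_ge_atTop 1] with n hn hn1
    have hnp : (0 : ℝ) < n := by exact_mod_cast hn1
    set y := (n : ℝ)⁻¹ • x n with hy
    have hxy : x n = (n : ℝ) • y := by rw [hy, smul_smul, mul_inv_cancel₀ hnp.ne', one_smul]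
    have h2 := (Complex.abs_re_le_norm (y - 1)).trans hn
    rw [abs_le, Complex.sub_re, Complex.one_re] at h2
    have h3 : ‖y‖ ≤ 9 / 8 := by
      have := norm_add_le (y - 1) 1
      rw [sub_add_cancel, norm_one] at this
      linarith
    have hre : (x n).re = n * y.re := by rw [hxy, Complex.smul_re]; rfl
    have hno : ‖x n‖ = n * ‖y‖ := by rw [hxy, norm_smul, Real.norm_of_nonneg hnp.le]
    refine ⟨hn1, by rw [hre]; nlinarith [h2.1], ?_⟩
    have hp : 0 < ‖x n‖ := norm_pos_iff.2 (hx0 n)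
    rw [Complex.inv_re, Complex.normSq_eq_norm_sq, norm_inv, le_div_iff₀ (by positivity)]
    have : 3 / 4 * ‖x n‖⁻¹ * ‖x n‖ ^ 2 = 3 / 4 * ‖x n‖ := by field_simp
    rw [this, hre, hno]
    nlinarith [h2.1]
  have hvb : ∀ᶠ n : ℕ in atTop, ‖(x n)⁻¹‖ ≤ 2 / n := by
    filter_upwards [hgeo] with n hn
    have hnp : (0 : ℝ) < n := by exact_mod_cast hn.1
    have h1 : (n : ℝ) / 2 ≤ ‖x n‖ := hn.2.1.trans ((le_abs_self _).trans (Complex.abs_re_le_norm _))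
    rw [norm_inv, ← inv_div]
    exact inv_anti₀ (by positivity) h1
  -- `x n * w n` stays bounded
  obtain ⟨K, hK0, hK⟩ : ∃ K : ℝ, 0 ≤ K ∧ ∀ᶠ n in atTop, ‖w n‖ ≤ K * ‖(x n)⁻¹‖ := by
    obtain ⟨C, r, hC, hr, hstep⟩ := step_xω N.one_lt
    have hev : ∀ᶠ n : ℕ in atTop, 1 + ‖x (n + 1)‖ * ‖w (n + 1)‖ ≤
        (1 + ‖x n‖ * ‖w n‖) * (1 + 4 * C * (1 / (n : ℝ) ^ 2)) := by
      filter_upwards [hgeo, hvb, hvn.eventually_lt_const hr, hwn.eventually_lt_const hr]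
        with n h1 h2 h3 h4
      have h5 := hstep (x n) (w n) (hx0 n) h3 h4 h1.2.2
      rw [← hx1, ← hw1] at h5
      have h6 : C * ‖(x n)⁻¹‖ ^ 2 ≤ 4 * C * (1 / (n : ℝ) ^ 2) := by
        calc C * ‖(x n)⁻¹‖ ^ 2 ≤ C * (2 / n) ^ 2 := by gcongr
          _ = _ := by ring
      have h7 : 0 ≤ ‖x n‖ * ‖w n‖ * (4 * C * (1 / (n : ℝ) ^ 2)) := by positivity
      nlinarith
    obtain ⟨n₀, hn₀⟩ := eventually_atTop.1 hev
    obtain ⟨M, hM0, hM⟩ := bounded_of_step_le (b := fun n => 1 + ‖x n‖ * ‖w n‖)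
      (d := fun n => 4 * C * (1 / (n : ℝ) ^ 2)) (fun n => by positivity) (fun n => by positivity)
      ((Real.summable_one_div_nat_pow.2 (by norm_num)).mul_left _) hn₀
    refine ⟨M, hM0, ?_⟩
    filter_upwards [eventually_ge_atTop n₀] with n hn
    have h1 := hM n hn
    have hp : 0 < ‖x n‖ := norm_pos_iff.2 (hx0 n)
    rw [norm_inv, ← div_eq_mul_inv, le_div_iff₀ hp]
    linarith
  -- the second Fatou coordinate stays bounded
  obtain ⟨C, R', hC, hR', hstep⟩ := step_Y N K hK0
  have hre : Tendsto (fun n => (x n).re) atTop atTop := by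
    refine tendsto_atTop_mono' atTop (hgeo.mono fun n hn => hn.2.1) ?_
    exact tendsto_natCast_atTop_atTop.atTop_div_const (by norm_num)
  have hev : ∀ᶠ n : ℕ in atTop, 1 + ‖(Th γ h κ ((Gm γ)^[n + 1] q)).2‖ ≤
      (1 + ‖(Th γ h κ ((Gm γ)^[n] q)).2‖) * (1 + C * ((n : ℝ) / 2) ^ (-(1 + η))) := by
    filter_upwards [hgeo, hK, hre.eventually_gt_atTop R'] with n h1 h2 h3
    have h4 := hstep (x n) (w n) h3 h2
    rw [← hsucc, ← hpt] at h4
    have hnp : (0 : ℝ) < n := by exact_mod_cast h1.1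
    have h5 : ‖x n‖ ^ (-(1 + η)) ≤ ((n : ℝ) / 2) ^ (-(1 + η)) := by
      refine Real.rpow_le_rpow_of_nonpos (by positivity) ?_ (by linarith [N.pos])
      exact h1.2.1.trans ((le_abs_self _).trans (Complex.abs_re_le_norm _))
    have h6 := norm_add_le ((Th γ h κ ((Gm γ)^[n + 1] q)).2 - (Th γ h κ ((Gm γ)^[n] q)).2)
      (Th γ h κ ((Gm γ)^[n] q)).2
    rw [sub_add_cancel] at h6
    have h7 : C * ‖x n‖ ^ (-(1 + η)) * (1 + ‖(Th γ h κ ((Gm γ)^[n] q)).2‖) ≤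
        C * ((n : ℝ) / 2) ^ (-(1 + η)) * (1 + ‖(Th γ h κ ((Gm γ)^[n] q)).2‖) := by gcongr
    nlinarith
  obtain ⟨n₀, hn₀⟩ := eventually_atTop.1 hev
  obtain ⟨M, hM0, hM⟩ := bounded_of_step_le (b := fun n => 1 + ‖(Th γ h κ ((Gm γ)^[n] q)).2‖)
    (d := fun n => C * ((n : ℝ) / 2) ^ (-(1 + η))) (fun n => by positivity)
    (fun n => by positivity) (by
      refine Summable.mul_left _ ?_
      have h1 : Summable (fun n : ℕ => (n : ℝ) ^ (-(1 + η)) / 2 ^ (-(1 + η))) :=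
        (Real.summable_nat_rpow.2 (by linarith [N.pos])).div_const _
      refine h1.congr (fun n => ?_)
      rw [Real.div_rpow (by positivity) (by norm_num)]) hn₀
  refine ⟨M, fun R => ?_⟩
  filter_upwards [eventually_ge_atTop n₀, hre.eventually_gt_atTop R] with n h1 h2
  refine ⟨h2, ?_⟩
  have := hM n h1
  linarith

/-! ### The planar basin is biholomorphic to the plane -/

/-- The inverse of `Gm γ`. Here `s = ω - v + v·E` and `A = v·E` are expressed through the image point. -/
noncomputable def Gi (γ : ℂ) (q : ℂ × ℂ) : ℂ × ℂ :=
  let s := (q.2 - q.1 ^ 2) * Complex.exp ((1 + γ) * q.1)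
  let A := q.1 * Complex.exp s
  (A * Complex.exp (A - s), s - A + A * Complex.exp (A - s))

lemma differentiable_Gi (γ : ℂ) : Differentiable ℂ (Gi γ) := by
  unfold Gi; fun_prop

lemma Gi_Gm (γ : ℂ) : Function.LeftInverse (Gi γ) (Gm γ) := by
  rintro ⟨v, ω⟩
  have h1 : Complex.exp (-((1 + γ) * (v * Complex.exp (-(v * Ef (v, ω)))))) *
      Complex.exp ((1 + γ) * (v * Complex.exp (-(v * Ef (v, ω))))) = 1 := by
    rw [← Complex.exp_add]; simp
  have hs : ((Gm γ (v, ω)).2 - (Gm γ (v, ω)).1 ^ 2) * Complex.exp ((1 + γ) * (Gm γ (v, ω)).1) =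
      ω - v + v * Ef (v, ω) := by
    simp only [Gm, add_sub_cancel_right]
    rw [mul_assoc, h1, mul_one]
  have hA : (Gm γ (v, ω)).1 * Complex.exp (ω - v + v * Ef (v, ω)) = v * Ef (v, ω) := by
    simp only [Gm]
    rw [mul_assoc, ← Complex.exp_add]
    congr 1
    simp only [Ef]
    congr 1; ring
  have hB : v * Ef (v, ω) * Complex.exp (v * Ef (v, ω) - (ω - v + v * Ef (v, ω))) = v := by
    rw [mul_assoc]
    nth_rw 1 [Ef]
    rw [← Complex.exp_add]
    ring_nf; simp
  simp only [Gi]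
  rw [hs, hA, hB]
  ext <;> simp

lemma Gm_Gi (γ : ℂ) : Function.RightInverse (Gi γ) (Gm γ) := by
  intro q
  set s := (q.2 - q.1 ^ 2) * Complex.exp ((1 + γ) * q.1) with hs
  set A := q.1 * Complex.exp s with hA
  have hG : Gi γ q = (A * Complex.exp (A - s), s - A + A * Complex.exp (A - s)) := rfl
  have hE : A * Complex.exp (A - s) * Ef (Gi γ q) = A := by
    rw [hG]; simp only [Ef]
    rw [mul_assoc, ← Complex.exp_add]; ring_nf; simp
  have hv : A * Complex.exp (A - s) * Complex.exp (-A) = q.1 := by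
    rw [hA, mul_assoc, mul_assoc, ← Complex.exp_add, ← Complex.exp_add]; ring_nf; simp
  have h1 : (Gi γ q).1 = A * Complex.exp (A - s) := rfl
  have h2 : (Gi γ q).2 = s - A + A * Complex.exp (A - s) := rfl
  have h3 : Complex.exp ((1 + γ) * q.1) * Complex.exp (-((1 + γ) * q.1)) = 1 := by
    rw [← Complex.exp_add]; simp
  simp only [Gm]
  rw [h1, h2, hE, hv]
  ext
  · rfl
  · simp only [add_sub_cancel_right, sub_add_cancel]
    rw [hs, mul_assoc, h3]; ring

/-- The points of `{v ≠ 0}` whose orbit under the planar map tends to the origin. -/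
def planarBasin (γ : ℂ) : Set (ℂ × ℂ) :=
  {q | q.1 ≠ 0 ∧ Tendsto (fun n => (Gm γ)^[n] q) atTop (𝓝 0)}

lemma mem_planarBasin_iterate {γ : ℂ} {q : ℂ × ℂ} (m : ℕ) :
    (Gm γ)^[m] q ∈ planarBasin γ ↔ q ∈ planarBasin γ := by
  unfold planarBasin
  simp only [mem_ofPred_eq, Gm_iter_fst_ne, ← Function.iterate_add_apply]
  rw [tendsto_add_atTop_iff_nat (f := fun n => (Gm γ)^[n] q) m]

/-- `La` conjugates the map in Fatou coordinates back to the planar map. -/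
lemma La_iterate {γ : ℝ} {h : ℂ → ℂ} {κ : ℂ} (n : ℕ) (d : ℂ × ℂ) :
    La γ h κ ((Tm γ h κ)^[n] d) = (Gm γ)^[n] (La γ h κ d) :=
  (show Function.Semiconj (La γ h κ) (Tm γ h κ) (Gm γ) from fun _ => La_Th _).iterate_right n d

lemma Th_iterate {γ : ℝ} {h : ℂ → ℂ} {κ : ℂ} (n : ℕ) (q : ℂ × ℂ) :
    (Tm γ h κ)^[n] (Th γ h κ q) = Th γ h κ ((Gm γ)^[n] q) := by
  have : Function.Semiconj (Th γ h κ) (Gm γ) (Tm γ h κ) := fun q => by rw [Tm, La_Th]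
  exact (this.iterate_right n q).symm

lemma La_tendsto {γ : ℝ} {h : ℂ → ℂ} {κ : ℂ} {η : ℝ} (N : NormalForm γ h κ η) {R M : ℝ}
    {d : ℕ → ℂ × ℂ} (hd : ∀ n : ℕ, d n ∈ Dom (R + n / 2 - 1) M) :
    Tendsto (fun n => La γ h κ (d n)) atTop (𝓝 0) := by
  obtain ⟨C, R', hC, hR', hb⟩ := La_bound N M
  have h0 : Tendsto (fun n : ℕ => R + (n : ℝ) / 2 - 1) atTop atTop := by
    have := (tendsto_natCast_atTop_atTop (R := ℝ)).atTop_div_const (show (0 : ℝ) < 2 by norm_num)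
    exact tendsto_atTop_add_const_right _ (-1) (tendsto_atTop_add_const_left _ R this)
  have hre : Tendsto (fun n => (d n).1.re) atTop atTop :=
    tendsto_atTop_mono (fun n => (hd n).1.le) h0
  have hno : Tendsto (fun n => ‖(d n).1‖) atTop atTop :=
    tendsto_atTop_mono (fun n => (le_abs_self _).trans (Complex.abs_re_le_norm _)) hre
  have h1 : Tendsto (fun n => (La γ h κ (d n)).1) atTop (𝓝 0) :=
    tendsto_inv₀_cobounded.comp (tendsto_norm_atTop_iff_cobounded.1 hno)
  have h2 : Tendsto (fun n => (La γ h κ (d n)).2) atTop (𝓝 0) := by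
    have h3 : Tendsto (fun n => C * ‖(d n).1‖ ^ (-(1 + η))) atTop (𝓝 0) := by
      have h4 : Tendsto (fun y : ℝ => y ^ (-(1 + η))) atTop (𝓝 0) :=
        tendsto_rpow_neg_atTop (by linarith [N.pos])
      have h5 := (h4.comp hno).const_mul C
      rw [mul_zero] at h5
      exact h5
    refine squeeze_zero_norm' ?_ h3
    filter_upwards [hre.eventually_gt_atTop R'] with n hn
    exact hb (d n) ⟨hn, (hd n).2⟩
  exact h1.prodMk_nhds h2

/-- The planar basin is biholomorphic to `ℂ²`. The map is the limit of the Fatou approximations along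
the whole orbit; it is well defined on the basin because orbits enter the domains of
`fatou_biholo`, and it is onto because these domains reach every point after a translation. -/
lemma planar_biholo {γ : ℝ} (hγ : 1 < γ) : ∃ Φ Ψ : ℂ × ℂ → ℂ × ℂ,
    (∀ q ∈ planarBasin γ, DifferentiableAt ℂ Φ q) ∧ Differentiable ℂ Ψ ∧
    (∀ q ∈ planarBasin γ, Ψ (Φ q) = q) ∧ ∀ ξ, Ψ ξ ∈ planarBasin γ ∧ Φ (Ψ ξ) = ξ := by
  obtain ⟨h, κ, η, C₀, R₀, hh, hη, hη2, hηγ, hC₀, hR₀, hb₀⟩ := exists_normal_form hγ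
  have N : NormalForm γ h κ η := ⟨hγ, hh, hη, hη2, hηγ, C₀, R₀, hC₀, hR₀, hb₀⟩
  choose R φ S hR hstay hlim hφd hφo hSd hSφ hsurj using fatou_biholo hη (tailHyp N)
  set T := Tm γ h κ
  set Φ : ℂ × ℂ → ℂ × ℂ := fun q => limUnder atTop (fun n => fatouSeq T n (Th γ h κ q)) with hΦ
  -- expression for `Φ` at points whose orbit lies in the domain after `m` steps
  have hformula : ∀ M m q, Th γ h κ ((Gm γ)^[m] q) ∈ Dom (R M) M →
      Φ q = φ M (Th γ h κ ((Gm γ)^[m] q)) - ((m : ℂ), 0) := by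
    intro M m q hq
    refine Tendsto.limUnder_eq ?_
    rw [← tendsto_add_atTop_iff_nat m]
    refine ((hlim M _ hq).sub_const ((m : ℂ), 0)).congr (fun n => ?_)
    simp only [fatouSeq]
    rw [Function.iterate_add_apply, Th_iterate m q]
    ext
    · simp; ring
    · simp
  have hLa : ∀ M, ∀ d ∈ Dom (R M) M, La γ h κ d ∈ planarBasin γ := by
    intro M d hd
    refine ⟨?_, ?_⟩
    · have : d.1 ≠ 0 := by
        intro h0
        have := hd.1
        rw [h0, Complex.zero_re] at this
        linarith [hR M]
      exact inv_ne_zero this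
    · have := La_tendsto N (hstay M d hd)
      refine this.congr (fun n => ?_)
      exact La_iterate n d
  have hinj : ∀ q ∈ planarBasin γ, ∀ q' ∈ planarBasin γ, Φ q = Φ q' → q = q' := by
    intro q hq q' hq' heq
    obtain ⟨M₁, h1⟩ := enter N hq.1 hq.2
    obtain ⟨M₂, h2⟩ := enter N hq'.1 hq'.2
    set M := max M₁ M₂
    obtain ⟨m, hm1, hm2⟩ := ((h1 (R M)).and (h2 (R M))).exists
    have hd1 : Th γ h κ ((Gm γ)^[m] q) ∈ Dom (R M) M := ⟨hm1.1, hm1.2.trans_le (le_max_left _ _)⟩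
    have hd2 : Th γ h κ ((Gm γ)^[m] q') ∈ Dom (R M) M :=
      ⟨hm2.1, hm2.2.trans_le (le_max_right _ _)⟩
    rw [hformula M m q hd1, hformula M m q' hd2] at heq
    have h3 : φ M (Th γ h κ ((Gm γ)^[m] q)) = φ M (Th γ h κ ((Gm γ)^[m] q')) := by
      simpa using heq
    have h4 : Th γ h κ ((Gm γ)^[m] q) = Th γ h κ ((Gm γ)^[m] q') := by
      rw [← hSφ M _ hd1, h3, hSφ M _ hd2]
    have h5 : (Gm γ)^[m] q = (Gm γ)^[m] q' := by
      rw [← La_Th (γ := γ) (h := h) (κ := κ) ((Gm γ)^[m] q), h4, La_Th]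
    exact (Gi_Gm (γ : ℂ)).injective.iterate m h5
  -- local inverse of `Φ`: translate by `n`, invert in the domain, and apply the inverse of `G` `n` times
  set L : ℝ → ℕ → ℂ × ℂ → ℂ × ℂ := fun M n ξ =>
    (Gi γ)^[n] (La γ h κ (S M (ξ + ((n : ℂ), 0)))) with hL
  have hlocal : ∀ (M : ℝ) (n : ℕ) (ξ : ℂ × ℂ), ξ + ((n : ℂ), 0) ∈ φ M '' Dom (R M) M →
      L M n ξ ∈ planarBasin γ ∧ Φ (L M n ξ) = ξ := by
    rintro M n ξ ⟨d, hd, hdξ⟩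
    have h1 : S M (ξ + ((n : ℂ), 0)) = d := by rw [← hdξ, hSφ M d hd]
    have h2 : (Gm γ)^[n] (L M n ξ) = La γ h κ d := by
      simp only [hL]
      rw [h1]
      exact (Gm_Gi (γ : ℂ)).iterate n _
    refine ⟨?_, ?_⟩
    · rw [← mem_planarBasin_iterate n, h2]; exact hLa M d hd
    · rw [hformula M n _ (by rw [h2, Th_La]; exact hd), h2, Th_La, hdξ, add_sub_cancel_right]
  have hex : ∀ ξ : ℂ × ℂ, ∃ n : ℕ,
      ξ + ((n : ℂ), 0) ∈ φ (‖ξ.2‖ + 2) '' Dom (R (‖ξ.2‖ + 2)) (‖ξ.2‖ + 2) := by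
    intro ξ
    obtain ⟨n, hn⟩ := hsurj (‖ξ.2‖ + 2) ξ (by linarith)
    refine ⟨n, ?_⟩
    convert hn using 1
    ext <;> simp
  choose n hn using hex
  set Ψ : ℂ × ℂ → ℂ × ℂ := fun ξ => L (‖ξ.2‖ + 2) (n ξ) ξ with hΨ
  have hΨ1 : ∀ ξ, Ψ ξ ∈ planarBasin γ ∧ Φ (Ψ ξ) = ξ := fun ξ => hlocal _ _ _ (hn ξ)
  refine ⟨Φ, Ψ, ?_, ?_, ?_, hΨ1⟩
  · intro q hq
    obtain ⟨M, hM⟩ := enter N hq.1 hq.2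
    obtain ⟨m, hm⟩ := (hM (R M)).exists
    have hG : DifferentiableAt ℂ ((Gm γ)^[m]) q := ((differentiable_Gm γ).iterate m) q
    have hTh : DifferentiableAt ℂ (fun q => Th γ h κ ((Gm γ)^[m] q)) q := by
      refine DifferentiableAt.comp q (g := Th γ h κ) (differentiableAt_Th hh ?_) hG
      have : R M < (((Gm γ)^[m] q).1⁻¹).re := hm.1
      linarith [hR M]
    have hopen := isOpen_Dom (R M) M
    have hev : ∀ᶠ q' in 𝓝 q, Th γ h κ ((Gm γ)^[m] q') ∈ Dom (R M) M :=
      hTh.continuousAt.eventually (hopen.mem_nhds hm)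
    have hd : DifferentiableAt ℂ
        (fun q' => φ M (Th γ h κ ((Gm γ)^[m] q')) - ((m : ℂ), (0 : ℂ))) q := by
      refine DifferentiableAt.sub_const ?_ _
      exact DifferentiableAt.comp q (g := φ M) ((hφd M).differentiableAt (hopen.mem_nhds hm)) hTh
    exact hd.congr_of_eventuallyEq (hev.mono fun q' hq' => hformula M m q' hq')
  · intro ξ
    set M := ‖ξ.2‖ + 2
    have hadd : DifferentiableAt ℂ (fun ξ' : ℂ × ℂ => ξ' + ((n ξ : ℂ), (0 : ℂ))) ξ := by fun_prop
    have hev : ∀ᶠ ξ' in 𝓝 ξ, ξ' + ((n ξ : ℂ), 0) ∈ φ M '' Dom (R M) M :=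
      hadd.continuousAt.eventually ((hφo M).mem_nhds (hn ξ))
    have hmem : S M (ξ + ((n ξ : ℂ), 0)) ∈ Dom (R M) M := by
      obtain ⟨d, hd, hdξ⟩ := hn ξ
      rw [← hdξ, hSφ M d hd]; exact hd
    have hS : DifferentiableAt ℂ (fun ξ' : ℂ × ℂ => S M (ξ' + ((n ξ : ℂ), 0))) ξ :=
      DifferentiableAt.comp ξ (g := S M) ((hSd M).differentiableAt ((hφo M).mem_nhds (hn ξ))) hadd
    have hLd : DifferentiableAt ℂ (fun ξ' : ℂ × ℂ => La γ h κ (S M (ξ' + ((n ξ : ℂ), 0)))) ξ := by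
      refine DifferentiableAt.comp ξ (g := La γ h κ) (differentiableAt_La hh ?_) hS
      linarith [hR M, hmem.1]
    have hd : DifferentiableAt ℂ (L M (n ξ)) ξ :=
      DifferentiableAt.comp ξ (g := (Gi γ)^[n ξ]) (((differentiable_Gi γ).iterate (n ξ)) _) hLd
    refine hd.congr_of_eventuallyEq (hev.mono fun ξ' hξ' => ?_)
    obtain ⟨h1, h2⟩ := hlocal M (n ξ) ξ' hξ'
    obtain ⟨h3, h4⟩ := hΨ1 ξ'
    exact hinj _ h3 _ h1 (h4.trans h2.symm)
  · intro q hq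
    obtain ⟨h1, h2⟩ := hΨ1 (Φ q)
    exact hinj _ h1 _ hq h2

/-! ### Reduction from three variables to two -/

/-- The inverse of `φ₃`. -/
noncomputable def φ₃inv (a b c : ℂ) (p : ℂ × ℂ × ℂ) : ℂ × ℂ × ℂ :=
  (p.1, p.2.1, (p.2.2 - (a + b) * p.1 ^ 2 * p.2.1 ^ 2) * Complex.exp ((a + b + c) * p.1 * p.2.1))

/-- The inverse of `F`. -/
noncomputable def Finv (a b c : ℂ) : ℂ × ℂ × ℂ → ℂ × ℂ × ℂ :=
  φ₁inv ∘ φ₂inv a b ∘ φ₁ ∘ φ₂ a b ∘ φ₃inv a b c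

lemma exp_mul_exp_neg (x : ℂ) : Complex.exp x * Complex.exp (-x) = 1 := by
  rw [← Complex.exp_add]; simp

lemma exp_neg_mul_exp (x : ℂ) : Complex.exp (-x) * Complex.exp x = 1 := by
  rw [← Complex.exp_add]; simp

lemma φ₁_φ₁inv (p : ℂ × ℂ × ℂ) : φ₁ (φ₁inv p) = p := by simp [φ₁, φ₁inv]

lemma φ₁inv_φ₁ (p : ℂ × ℂ × ℂ) : φ₁inv (φ₁ p) = p := by simp [φ₁, φ₁inv]

lemma φ₂_φ₂inv (a b : ℂ) (p : ℂ × ℂ × ℂ) : φ₂ a b (φ₂inv a b p) = p := by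
  simp [φ₂, φ₂inv, mul_assoc, exp_neg_mul_exp]

lemma φ₂inv_φ₂ (a b : ℂ) (p : ℂ × ℂ × ℂ) : φ₂inv a b (φ₂ a b p) = p := by
  simp [φ₂, φ₂inv, mul_assoc, exp_mul_exp_neg]

lemma φ₃_φ₃inv (a b c : ℂ) (p : ℂ × ℂ × ℂ) : φ₃ a b c (φ₃inv a b c p) = p := by
  simp only [φ₃, φ₃inv]
  rw [mul_assoc (p.2.2 - _), exp_mul_exp_neg]
  simp

lemma φ₃inv_φ₃ (a b c : ℂ) (p : ℂ × ℂ × ℂ) : φ₃inv a b c (φ₃ a b c p) = p := by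
  simp only [φ₃, φ₃inv, add_sub_cancel_right]
  rw [mul_assoc p.2.2, exp_neg_mul_exp]
  simp

lemma Finv_leftInverse (a b c : ℂ) : Function.LeftInverse (Finv a b c) (Fmap a b c) := fun p => by
  simp only [Finv, Fmap, Function.comp_apply, φ₃inv_φ₃, φ₂_φ₂inv, φ₁_φ₁inv, φ₂inv_φ₂, φ₁inv_φ₁]

lemma Finv_rightInverse (a b c : ℂ) : Function.RightInverse (Finv a b c) (Fmap a b c) :=
  fun p => by
  simp only [Finv, Fmap, Function.comp_apply, φ₃_φ₃inv, φ₂inv_φ₂, φ₁inv_φ₁, φ₂_φ₂inv, φ₁_φ₁inv]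

lemma differentiable_Fmap (a b c : ℂ) : Differentiable ℂ (Fmap a b c) := by
  unfold Fmap φ₃ φ₂inv φ₁inv φ₂ φ₁
  simp only [Function.comp_def]
  fun_prop

lemma differentiable_Finv (a b c : ℂ) : Differentiable ℂ (Finv a b c) := by
  unfold Finv φ₃inv φ₂inv φ₁inv φ₂ φ₁
  simp only [Function.comp_def]
  fun_prop

lemma Fmap_zero (a b c : ℂ) : Fmap a b c 0 = 0 := by
  simp [Fmap, φ₃, φ₂inv, φ₁inv, φ₂, φ₁]

lemma hasFDerivAt_coord1 (p : ℂ × ℂ × ℂ) : HasFDerivAt (fun p : ℂ × ℂ × ℂ => p.1)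
    (ContinuousLinearMap.fst ℂ ℂ (ℂ × ℂ)) p := hasFDerivAt_fst

lemma hasFDerivAt_coord2 (p : ℂ × ℂ × ℂ) : HasFDerivAt (fun p : ℂ × ℂ × ℂ => p.2.1)
    ((ContinuousLinearMap.fst ℂ ℂ ℂ).comp (ContinuousLinearMap.snd ℂ ℂ (ℂ × ℂ))) p :=
  (hasFDerivAt_fst (p := p.2)).comp p hasFDerivAt_snd

lemma hasFDerivAt_coord3 (p : ℂ × ℂ × ℂ) : HasFDerivAt (fun p : ℂ × ℂ × ℂ => p.2.2)
    ((ContinuousLinearMap.snd ℂ ℂ ℂ).comp (ContinuousLinearMap.snd ℂ ℂ (ℂ × ℂ))) p :=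
  (hasFDerivAt_snd (p := p.2)).comp p hasFDerivAt_snd

lemma hasFDerivAt_φ₁ : HasFDerivAt φ₁ (ContinuousLinearMap.id ℂ (ℂ × ℂ × ℂ)) 0 := by
  have h1 := hasFDerivAt_coord1 0
  have h2 := hasFDerivAt_coord2 0
  have h3 := hasFDerivAt_coord3 0
  exact (h1.prodMk (h2.prodMk (h3.sub (h1.mul h2)))).congr_fderiv (by ext <;> simp)

lemma hasFDerivAt_φ₁inv : HasFDerivAt φ₁inv (ContinuousLinearMap.id ℂ (ℂ × ℂ × ℂ)) 0 := by
  have h1 := hasFDerivAt_coord1 0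
  have h2 := hasFDerivAt_coord2 0
  have h3 := hasFDerivAt_coord3 0
  exact (h1.prodMk (h2.prodMk (h3.add (h1.mul h2)))).congr_fderiv (by ext <;> simp)

lemma hasFDerivAt_φ₂ (a b : ℂ) :
    HasFDerivAt (φ₂ a b) (ContinuousLinearMap.id ℂ (ℂ × ℂ × ℂ)) 0 := by
  have h1 := hasFDerivAt_coord1 0
  have h2 := hasFDerivAt_coord2 0
  have h3 := hasFDerivAt_coord3 0
  exact ((h1.mul (h3.const_mul a).cexp).prodMk ((h2.mul (h3.const_mul b).cexp).prodMk
    h3)).congr_fderiv (by ext <;> simp)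

lemma hasFDerivAt_φ₂inv (a b : ℂ) :
    HasFDerivAt (φ₂inv a b) (ContinuousLinearMap.id ℂ (ℂ × ℂ × ℂ)) 0 := by
  have h1 := hasFDerivAt_coord1 0
  have h2 := hasFDerivAt_coord2 0
  have h3 := hasFDerivAt_coord3 0
  exact ((h1.mul (h3.const_mul a).neg.cexp).prodMk ((h2.mul (h3.const_mul b).neg.cexp).prodMk
    h3)).congr_fderiv (by ext <;> simp)

lemma hasFDerivAt_φ₃ (a b c : ℂ) :
    HasFDerivAt (φ₃ a b c) (ContinuousLinearMap.id ℂ (ℂ × ℂ × ℂ)) 0 := by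
  have h1 := hasFDerivAt_coord1 0
  have h2 := hasFDerivAt_coord2 0
  have h3 := hasFDerivAt_coord3 0
  exact (h1.prodMk (h2.prodMk ((h3.mul ((h1.const_mul (a + b + c)).mul h2).neg.cexp).add
    (((h1.pow 2).const_mul (a + b)).mul (h2.pow 2))))).congr_fderiv (by ext <;> simp)

lemma hasFDerivAt_Fmap (a b c : ℂ) :
    HasFDerivAt (Fmap a b c) (ContinuousLinearMap.id ℂ (ℂ × ℂ × ℂ)) 0 := by
  have z1 : φ₁ 0 = 0 := by simp [φ₁]
  have z2 : φ₂ a b 0 = 0 := by simp [φ₂]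
  have z3 : φ₁inv 0 = 0 := by simp [φ₁inv]
  have z4 : φ₂inv a b 0 = 0 := by simp [φ₂inv]
  have c1 := HasFDerivAt.comp (0 : ℂ × ℂ × ℂ) (by rw [z1]; exact hasFDerivAt_φ₂ a b) hasFDerivAt_φ₁
  have c2 := HasFDerivAt.comp (0 : ℂ × ℂ × ℂ)
    (by simp only [Function.comp_apply, z1, z2]; exact hasFDerivAt_φ₁inv) c1
  have c3 := HasFDerivAt.comp (0 : ℂ × ℂ × ℂ)
    (by simp only [Function.comp_apply, z1, z2, z3]; exact hasFDerivAt_φ₂inv a b) c2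
  have c4 := HasFDerivAt.comp (0 : ℂ × ℂ × ℂ)
    (by simp only [Function.comp_apply, z1, z2, z3, z4]; exact hasFDerivAt_φ₃ a b c) c3
  exact c4

/-- The semiconjugacy `(z, t, w) ↦ (2a·zt, 2a·w)` from `F` to the planar map. -/
noncomputable def Pr (a : ℝ) (p : ℂ × ℂ × ℂ) : ℂ × ℂ := (2 * a * (p.1 * p.2.1), 2 * a * p.2.2)

/-- Since `a = b`, the coordinates `z` and `t` are multiplied by the same factor. -/
lemma Fmap_apply (a : ℝ) (c : ℝ) (p : ℂ × ℂ × ℂ) :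
    (Fmap a a c p).1 = p.1 * Complex.exp (-((Pr a p).1 * Ef (Pr a p) / 2)) ∧
    (Fmap a a c p).2.1 = p.2.1 * Complex.exp (-((Pr a p).1 * Ef (Pr a p) / 2)) ∧
    (Fmap a a c p).2.2 = (p.2.2 - p.1 * p.2.1 + p.1 * p.2.1 * Ef (Pr a p)) *
      Complex.exp (-((a + a + c) * (Fmap a a c p).1 * (Fmap a a c p).2.1)) +
      (a + a) * (Fmap a a c p).1 ^ 2 * (Fmap a a c p).2.1 ^ 2 := by
  have hE : Complex.exp (a * (p.2.2 - p.1 * p.2.1)) * Complex.exp (a * (p.2.2 - p.1 * p.2.1)) =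
      Ef (Pr a p) := by
    rw [← Complex.exp_add, Ef, Pr]; congr 1; ring
  have hw : p.1 * Complex.exp (a * (p.2.2 - p.1 * p.2.1)) *
      (p.2.1 * Complex.exp (a * (p.2.2 - p.1 * p.2.1))) = p.1 * p.2.1 * Ef (Pr a p) := by
    rw [← hE]; ring
  have hm : Complex.exp (a * (p.2.2 - p.1 * p.2.1)) *
      Complex.exp (-(a * (p.2.2 - p.1 * p.2.1 + p.1 * p.2.1 * Ef (Pr a p)))) =
      Complex.exp (-((Pr a p).1 * Ef (Pr a p) / 2)) := by
    rw [← Complex.exp_add]; congr 1; simp only [Pr]; ring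
  refine ⟨?_, ?_, ?_⟩
  · simp only [Fmap, Function.comp_apply, φ₃, φ₂inv, φ₁inv, φ₂, φ₁]
    rw [hw, mul_assoc, hm]
  · simp only [Fmap, Function.comp_apply, φ₃, φ₂inv, φ₁inv, φ₂, φ₁]
    rw [hw, mul_assoc, hm]
  · simp only [Fmap, Function.comp_apply, φ₃, φ₂inv, φ₁inv, φ₂, φ₁]
    rw [hw]

lemma Pr_Fmap {a : ℝ} (ha : 0 < a) (c : ℝ) (p : ℂ × ℂ × ℂ) :
    Pr a (Fmap a a c p) = Gm ((c / (2 * a) : ℝ) : ℂ) (Pr a p) := by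
  obtain ⟨h1, h2, h3⟩ := Fmap_apply a c p
  have ha' : (a : ℂ) ≠ 0 := by exact_mod_cast ha.ne'
  have hsq : Complex.exp (-((Pr a p).1 * Ef (Pr a p) / 2)) *
      Complex.exp (-((Pr a p).1 * Ef (Pr a p) / 2)) =
      Complex.exp (-((Pr a p).1 * Ef (Pr a p))) := by
    rw [← Complex.exp_add]; congr 1; ring
  have hv : 2 * a * ((Fmap a a c p).1 * (Fmap a a c p).2.1) =
      (Pr a p).1 * Complex.exp (-((Pr a p).1 * Ef (Pr a p))) := by
    rw [h1, h2, ← hsq]; simp only [Pr]; ring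
  have hexp : (a + a + c) * (Fmap a a c p).1 * (Fmap a a c p).2.1 =
      (1 + ((c / (2 * a) : ℝ) : ℂ)) *
        (2 * a * ((Fmap a a c p).1 * (Fmap a a c p).2.1)) := by
    push_cast; field_simp; ring
  have hg : Pr a (Fmap a a c p) = (2 * a * ((Fmap a a c p).1 * (Fmap a a c p).2.1),
    2 * a * (Fmap a a c p).2.2) := rfl
  rw [hg, h3, hexp]
  have hq : 2 * (a : ℂ) * ((a + a) * (Fmap a a c p).1 ^ 2 * (Fmap a a c p).2.1 ^ 2) =
      (2 * a * ((Fmap a a c p).1 * (Fmap a a c p).2.1)) ^ 2 := by ring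
  rw [mul_add, hq, hv, Gm]
  ext
  · rfl
  · simp only [Pr]; ring

lemma Pr_iterate {a : ℝ} (ha : 0 < a) (c : ℝ) (n : ℕ) (p : ℂ × ℂ × ℂ) :
    Pr a ((Fmap a a c)^[n] p) = (Gm ((c / (2 * a) : ℝ) : ℂ))^[n] (Pr a p) :=
  (show Function.Semiconj (Pr a) (Fmap a a c) (Gm ((c / (2 * a) : ℝ) : ℂ)) from
    Pr_Fmap ha c).iterate_right n p

lemma continuous_Pr (a : ℝ) : Continuous (Pr a) := by unfold Pr; fun_prop

/-- The set `{zt = 0}` consists of fixed points, so it contains no point of the basin. -/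
lemma Fmap_fixed (a c : ℝ) {p : ℂ × ℂ × ℂ} (hp : p.1 * p.2.1 = 0) : Fmap a a c p = p := by
  obtain ⟨h1, h2, h3⟩ := Fmap_apply a c p
  have hv : (Pr a p).1 = 0 := by simp [Pr, hp]
  rw [hv] at h1 h2
  simp only [zero_mul, zero_div, neg_zero, Complex.exp_zero, mul_one] at h1 h2
  have e1 : ((a : ℂ) + a + c) * p.1 * p.2.1 = 0 := by rw [mul_assoc, hp, mul_zero]
  have e2 : ((a : ℂ) + a) * p.1 ^ 2 * p.2.1 ^ 2 = 0 := by
    rw [mul_assoc, ← mul_pow, hp]; simp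
  rw [h1, h2, e1, e2, hp] at h3
  ext
  · exact h1
  · exact h2
  · simpa using h3

/-- The ratio `z : t` is constant along orbits. -/
lemma Fmap_ratio (a c : ℝ) (p : ℂ × ℂ × ℂ) (n : ℕ) :
    ((Fmap a a c)^[n] p).1 * p.2.1 = p.1 * ((Fmap a a c)^[n] p).2.1 := by
  induction n with
  | zero => rfl
  | succ n ih =>
    rw [Function.iterate_succ_apply']
    obtain ⟨h1, h2, -⟩ := Fmap_apply a c ((Fmap a a c)^[n] p)
    rw [h1, h2, mul_right_comm, ih, mul_assoc]

/-- The basin of `F` is the preimage of the planar basin: `zₙtₙ → 0` together with the constant ratio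
`zₙ : tₙ` forces `zₙ → 0` and `tₙ → 0`. -/
lemma mem_basinF_iff {a : ℝ} (ha : 0 < a) (c : ℝ) (p : ℂ × ℂ × ℂ) :
    p ∈ basinF a a c ↔ Pr a p ∈ planarBasin ((c / (2 * a) : ℝ) : ℂ) := by
  have ha' : (a : ℂ) ≠ 0 := by exact_mod_cast ha.ne'
  constructor
  · rintro ⟨h0, hlim⟩
    refine ⟨?_, ?_⟩
    · intro hv
      have hp : p.1 * p.2.1 = 0 := by simpa [Pr, ha'] using hv
      have hfix : ∀ n, (Fmap a a c)^[n] p = p := fun n =>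
        Function.iterate_fixed (Fmap_fixed a c hp) n
      simp only [hfix] at hlim
      exact h0 (tendsto_nhds_unique tendsto_const_nhds hlim)
    · have := ((continuous_Pr a).tendsto 0).comp hlim
      have hP0 : Pr a 0 = 0 := by simp [Pr]
      rw [hP0] at this
      refine this.congr (fun n => ?_)
      exact Pr_iterate ha c n p
  · rintro ⟨h0, hlim⟩
    have hz : p.1 ≠ 0 := by intro h; simp [Pr, h] at h0
    have ht : p.2.1 ≠ 0 := by intro h; simp [Pr, h] at h0
    refine ⟨fun h => hz (by rw [h]; rfl), ?_⟩
    have hlim' : Tendsto (fun n => Pr a ((Fmap a a c)^[n] p)) atTop (𝓝 0) := by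
      simpa only [Pr_iterate ha] using hlim
    have l1 : Tendsto (fun n => 2 * a * (((Fmap a a c)^[n] p).1 * ((Fmap a a c)^[n] p).2.1))
      atTop (𝓝 0) := (continuous_fst.tendsto (0 : ℂ × ℂ)).comp hlim'
    have l2 : Tendsto (fun n => 2 * a * ((Fmap a a c)^[n] p).2.2)
      atTop (𝓝 0) := (continuous_snd.tendsto (0 : ℂ × ℂ)).comp hlim'
    have m3 : Tendsto (fun n => ((Fmap a a c)^[n] p).2.2) atTop (𝓝 0) := by
      have := l2.const_mul ((2 * (a : ℂ))⁻¹)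
      rw [mul_zero] at this
      refine this.congr (fun n => ?_)
      field_simp
    have hsq : Tendsto (fun n => ((Fmap a a c)^[n] p).1 ^ 2) atTop (𝓝 0) := by
      have := l1.const_mul (p.1 / (2 * a * p.2.1))
      rw [mul_zero] at this
      refine this.congr (fun n => ?_)
      have hr := Fmap_ratio a c p n
      field_simp
      linear_combination -((Fmap a a c)^[n] p).1 * hr
    have m1 : Tendsto (fun n => ((Fmap a a c)^[n] p).1) atTop (𝓝 0) := by
      rw [tendsto_zero_iff_norm_tendsto_zero]
      have := (Real.continuous_sqrt.tendsto 0).comp (by simpa using hsq.norm :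
        Tendsto (fun n => ‖((Fmap a a c)^[n] p).1‖ ^ 2) atTop (𝓝 0))
      rw [Real.sqrt_zero] at this
      refine this.congr (fun n => ?_)
      simp [Real.sqrt_sq (norm_nonneg _)]
    have m2 : Tendsto (fun n => ((Fmap a a c)^[n] p).2.1) atTop (𝓝 0) := by
      have := m1.const_mul (p.2.1 / p.1)
      rw [mul_zero] at this
      refine this.congr (fun n => ?_)
      have hr := Fmap_ratio a c p n
      field_simp
      linear_combination hr
    exact m1.prodMk_nhds (m2.prodMk_nhds m3)

/-- The biholomorphism is `(z, t, w) ↦ (z, Φ(v, ω))`, where `Φ` is the map of `planar_biholo`. -/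
lemma basin_biholo {a c : ℝ} (ha : 0 < a) (hc : 2 * a < c) :
    ∃ Φ Ψ : ℂ × ℂ × ℂ → ℂ × ℂ × ℂ,
      DifferentiableOn ℂ Φ (basinF (a : ℂ) (a : ℂ) (c : ℂ)) ∧
      DifferentiableOn ℂ Ψ {q : ℂ × ℂ × ℂ | q.1 ≠ 0} ∧
      Set.BijOn Φ (basinF (a : ℂ) (a : ℂ) (c : ℂ)) {q : ℂ × ℂ × ℂ | q.1 ≠ 0} ∧
      (∀ p ∈ basinF (a : ℂ) (a : ℂ) (c : ℂ), Ψ (Φ p) = p) ∧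
      (∀ q ∈ {q : ℂ × ℂ × ℂ | q.1 ≠ 0}, Φ (Ψ q) = q) := by
  have hγ : 1 < c / (2 * a) := by rw [lt_div_iff₀ (by positivity)]; linarith
  have ha' : (a : ℂ) ≠ 0 := by exact_mod_cast ha.ne'
  obtain ⟨φ, ψ, hφ, hψ, hψφ, hφψ⟩ := planar_biholo hγ
  have hz : ∀ p ∈ basinF (a : ℂ) (a : ℂ) (c : ℂ), p.1 ≠ 0 := by
    intro p hp h
    exact ((mem_basinF_iff ha c p).1 hp).1 (by simp [Pr, h])
  set Φ : ℂ × ℂ × ℂ → ℂ × ℂ × ℂ := fun p => (p.1, φ (Pr a p)) with hΦ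
  set Ψ : ℂ × ℂ × ℂ → ℂ × ℂ × ℂ := fun q =>
    (q.1, (ψ q.2).1 / (2 * a * q.1), (ψ q.2).2 / (2 * a)) with hΨ
  have hPr : ∀ q : ℂ × ℂ × ℂ, q.1 ≠ 0 → Pr a (Ψ q) = ψ q.2 := by
    intro q hq
    simp only [Pr, hΨ]
    ext
    · field_simp
    · field_simp
  have hleft : ∀ p ∈ basinF (a : ℂ) (a : ℂ) (c : ℂ), Ψ (Φ p) = p := by
    intro p hp
    have h1 := hz p hp
    simp only [hΨ, hΦ]
    rw [hψφ _ ((mem_basinF_iff ha c p).1 hp)]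
    simp only [Pr]
    ext
    · rfl
    · simp only; field_simp
    · simp only; field_simp
  have hright : ∀ q ∈ {q : ℂ × ℂ × ℂ | q.1 ≠ 0}, Φ (Ψ q) = q := by
    intro q hq
    have : Φ (Ψ q) = (q.1, φ (Pr a (Ψ q))) := rfl
    rw [this, hPr q hq, (hφψ q.2).2]
  refine ⟨Φ, Ψ, ?_, ?_, ?_, hleft, hright⟩
  · intro p hp
    have hP : DifferentiableAt ℂ (Pr a) p := by unfold Pr; fun_prop
    exact (differentiableAt_fst.prodMk
      ((hφ _ ((mem_basinF_iff ha c p).1 hp)).comp p hP)).differentiableWithinAt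
  · intro q hq
    have hq' : 2 * a * q.1 ≠ 0 := mul_ne_zero (mul_ne_zero two_ne_zero ha') hq
    have h2 : DifferentiableAt ℂ (fun q : ℂ × ℂ × ℂ => ψ q.2) q :=
      (hψ q.2).comp q differentiableAt_snd
    have h3 : DifferentiableAt ℂ (fun q : ℂ × ℂ × ℂ => 2 * (a : ℂ) * q.1) q := by fun_prop
    have h4 : DifferentiableAt ℂ (fun q : ℂ × ℂ × ℂ => (ψ q.2).1 / (2 * (a : ℂ) * q.1)) q := by
      simp only [div_eq_mul_inv]
      exact h2.fst.mul (h3.inv hq')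
    have h5 : DifferentiableAt ℂ (fun q : ℂ × ℂ × ℂ => (ψ q.2).2 / (2 * (a : ℂ))) q := by
      simp only [div_eq_mul_inv]
      exact h2.snd.mul_const _
    exact (differentiableAt_fst.prodMk (h4.prodMk h5)).differentiableWithinAt
  · refine InvOn.bijOn (f' := Ψ) ⟨hleft, hright⟩ hz ?_
    intro q hq
    rw [mem_basinF_iff ha, hPr q hq]
    exact (hφψ q.2).1

/-- Let `a = b > 0` real and `c > 2a` real. Then `F = φ₃ ∘ φ₂⁻¹ ∘ φ₁⁻¹ ∘ φ₂ ∘ φ₁`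
is a holomorphic automorphism of `ℂ³` tangent to the identity at the origin, and its basin of
attraction `Ω` is biholomorphic to `ℂ* × ℂ²`. -/
theorem basin_biholomorphic_Cstar_C2 (a c : ℝ) (ha : 0 < a) (hc : 2 * a < c) :
    -- `F` is a holomorphic automorphism
    Differentiable ℂ (Fmap (a : ℂ) (a : ℂ) (c : ℂ)) ∧
    Function.Bijective (Fmap (a : ℂ) (a : ℂ) (c : ℂ)) ∧
    (∃ Finv : ℂ × ℂ × ℂ → ℂ × ℂ × ℂ, Differentiable ℂ Finv ∧
      Function.LeftInverse Finv (Fmap (a : ℂ) (a : ℂ) (c : ℂ)) ∧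
      Function.RightInverse Finv (Fmap (a : ℂ) (a : ℂ) (c : ℂ))) ∧
    -- tangent to the identity at the origin
    Fmap (a : ℂ) (a : ℂ) (c : ℂ) 0 = 0 ∧
    fderiv ℂ (Fmap (a : ℂ) (a : ℂ) (c : ℂ)) 0 = ContinuousLinearMap.id ℂ (ℂ × ℂ × ℂ) ∧
    -- the basin is biholomorphic to `ℂ* × ℂ²`
    (∃ Φ Ψ : ℂ × ℂ × ℂ → ℂ × ℂ × ℂ,
      DifferentiableOn ℂ Φ (basinF (a : ℂ) (a : ℂ) (c : ℂ)) ∧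
      DifferentiableOn ℂ Ψ {q : ℂ × ℂ × ℂ | q.1 ≠ 0} ∧
      Set.BijOn Φ (basinF (a : ℂ) (a : ℂ) (c : ℂ)) {q : ℂ × ℂ × ℂ | q.1 ≠ 0} ∧
      (∀ p ∈ basinF (a : ℂ) (a : ℂ) (c : ℂ), Ψ (Φ p) = p) ∧
      (∀ q ∈ {q : ℂ × ℂ × ℂ | q.1 ≠ 0}, Φ (Ψ q) = q)) :=
  ⟨differentiable_Fmap _ _ _,
    ⟨(Finv_leftInverse _ _ _).injective, (Finv_rightInverse _ _ _).surjective⟩,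
    ⟨Finv a a c, differentiable_Finv _ _ _, Finv_leftInverse _ _ _, Finv_rightInverse _ _ _⟩,
    Fmap_zero _ _ _, (hasFDerivAt_Fmap _ _ _).fderiv, basin_biholo ha hc⟩
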